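/- Let X be a Peano space with only finitely many maximal cyclic subsets, each of which is locally strongly contractible. Then X is locally strongly contractible. -/

import Mathlib

open Metric Set

/-- A Jordan curve: a subset homeomorphic to the circle. -/
def IsJordanCurve {X : Type} [TopologicalSpace X] (J : Set X) : Prop :=
  Nonempty (AddCircle (1 : ℝ) ≃ₜ J)

/-- A set is cyclicly connected if every pair of its points lies on a Jordan curve in it. -/
def CyclicallyConnected {X : Type} [TopologicalSpace X] (C : Set X) : Prop :=
  ∀ x ∈ C, ∀ y ∈ C, ∃ J : Set X, J ⊆ C ∧ IsJordanCurve J ∧ x ∈ J ∧ y ∈ J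

/-- A maximal cyclic subset: non-degenerate, cyclicly connected, and not a proper subset
of any cyclicly connected subset. -/
def MaximalCyclic {X : Type} [TopologicalSpace X] (T : Set X) : Prop :=
  ¬ T.Subsingleton ∧ CyclicallyConnected T ∧
    ∀ C : Set X, CyclicallyConnected C → T ⊆ C → C = T
/-- Locally strongly contractible: every point `x` has arbitrarily small open
neighborhoods `V` such that `{x}` is a strong deformation retract of `V`. -/
def LocallyStronglyContractible (X : Type) [TopologicalSpace X] : Prop :=
  ∀ x : X, ∀ U ∈ nhds x, ∃ V : Set X, IsOpen V ∧ V ⊆ U ∧ ∃ (hx : x ∈ V),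
    ∃ H : C(↥V × unitInterval, ↥V),
      (∀ v, H (v, 0) = v) ∧ (∀ v, H (v, 1) = ⟨x, hx⟩) ∧ ∀ t, H (⟨x, hx⟩, t) = ⟨x, hx⟩

/-
Fix a point `x` and let `K` be the union of the maximal cyclic subsets through `x`. By finiteness,
a small connected neighborhood `V` of `x` meets no other maximal cyclic subset. Two maximal cyclic
subsets share at most one point, so the given contractions glue to a contraction of `K ∩ V`
to `x`. Outside `K` the neighborhood `V` contains no Jordan curve, so that every point of `V` is
joined to `K` by a unique arc, its arm, and the arms form a forest rooted in `K`. Measuring arms by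
a Whitney size function gives a height that parametrizes each of them injectively; lowering the
height continuously to zero deforms `V` into `K`, and the contraction of `K ∩ V` finishes the
argument.

The maximal cyclic subsets have to be closed for this. Suppose that `p ∉ T` is a limit point of a
maximal cyclic subset `T`. Then `p` is the end of an arc which lies in `T` but for `p`. Each point
of the arc close to `p` can be bypassed inside `T` and near `p`, so the end of the arc lies in
arbitrarily small cyclicly connected subsets of `T`. These provide ears which, attached to a
triangle in `T` ever closer to `p`, prolong its two sides through a corner to arcs ending at `p`.
The Jordan curve formed by these arcs shares two points with `T` and contains `p`, so that `T` is
not maximal.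
-/

open Topology Filter

/-- The concatenation of two functions on `[0, 1]`, each run at double speed; continuity and
matching endpoints are not assumed. -/
noncomputable def concat {X : Type*} (f g : ℝ → X) (t : ℝ) : X :=
  if t ≤ 1 / 2 then f (2 * t) else g (2 * t - 1)

lemma concat_mem {X : Type*} {S : Set X} {f g : ℝ → X} (hf : ∀ t, f t ∈ S)
    (hg : ∀ t, g t ∈ S) (t : ℝ) : concat f g t ∈ S := by
  unfold concat
  split_ifs
  exacts [hf _, hg _]

section StepPaths

variable {X : Type*} [PseudoMetricSpace X] {ε δ : ℝ} {a b : X}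

/-- Two points are `ε`-linked if they lie in a common preconnected set of diameter at most `ε`. -/
def SmallLinked (ε : ℝ) (a b : X) : Prop :=
  ∃ S : Set X, IsPreconnected S ∧ a ∈ S ∧ b ∈ S ∧ ∀ u ∈ S, ∀ v ∈ S, dist u v ≤ ε

lemma SmallLinked.dist_le (h : SmallLinked ε a b) : dist a b ≤ ε :=
  let ⟨_, _, ha, hb, hd⟩ := h
  hd a ha b hb

lemma SmallLinked.nonneg (h : SmallLinked ε a b) : 0 ≤ ε :=
  dist_nonneg.trans h.dist_le

lemma SmallLinked.symm (h : SmallLinked ε a b) : SmallLinked ε b a :=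
  let ⟨S, hS, ha, hb, hd⟩ := h
  ⟨S, hS, hb, ha, hd⟩

lemma eventually_smallLinked [LocallyConnectedSpace X] (hε : 0 < ε) (a : X) :
    ∀ᶠ b in 𝓝 a, SmallLinked ε a b := by
  obtain ⟨B, hBs, hBo, haB, hBc⟩ := locallyConnectedSpace_iff_subsets_isOpen_isConnected.1
    ‹_› a (ball a (ε / 2)) (ball_mem_nhds a (by positivity))
  filter_upwards [hBo.mem_nhds haB] with b hb
  exact ⟨B, hBc.isPreconnected, haB, hb, fun u hu v hv => by
    linarith [dist_triangle_right u v a, mem_ball.1 (hBs hu), mem_ball.1 (hBs hv)]⟩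

/-- `IsStepPath ε a b f` says that `f` is a step function from `a` to `b` whose jumps join
`ε`-linked points. -/
inductive IsStepPath (ε : ℝ) : X → X → (ℝ → X) → Prop
  | link {a b : X} (h : SmallLinked ε a b) : IsStepPath ε a b (concat (fun _ => a) fun _ => b)
  | trans {a b c : X} {f g : ℝ → X} (hf : IsStepPath ε a b f) (hg : IsStepPath ε b c g) :
      IsStepPath ε a c (concat f g)

lemma dist_concat_le {f g f' g' : ℝ → X} (hf : ∀ t, dist (f t) (f' t) ≤ ε)
    (hg : ∀ t, dist (g t) (g' t) ≤ ε) (t : ℝ) : dist (concat f g t) (concat f' g' t) ≤ ε := by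
  unfold concat
  split_ifs
  exacts [hf _, hg _]

lemma IsStepPath.apply_of_nonpos {f : ℝ → X} (hf : IsStepPath ε a b f) {t : ℝ} (ht : t ≤ 0) :
    f t = a := by
  induction hf generalizing t with
  | link => exact if_pos (by linarith)
  | trans _ _ ihf => exact (if_pos (by linarith)).trans (ihf (by linarith))

lemma IsStepPath.apply_of_one_le {f : ℝ → X} (hf : IsStepPath ε a b f) {t : ℝ} (ht : 1 ≤ t) :
    f t = b := by
  induction hf generalizing t with
  | link => exact if_neg (by linarith)
  | trans _ _ _ ihg => exact (if_neg (by linarith)).trans (ihg (by linarith))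

lemma eventually_dist_concat_le {f g : ℝ → X} (hfg : f 1 = g 0)
    (hf : ∀ t, ∀ᶠ s in 𝓝 t, dist (f s) (f t) ≤ ε) (hg : ∀ t, ∀ᶠ s in 𝓝 t, dist (g s) (g t) ≤ ε)
    (t : ℝ) : ∀ᶠ s in 𝓝 t, dist (concat f g s) (concat f g t) ≤ ε := by
  have hf' : ∀ᶠ s in 𝓝 t, dist (f (2 * s)) (f (2 * t)) ≤ ε :=
    (Continuous.tendsto (by fun_prop : Continuous fun s : ℝ => 2 * s) t).eventually (hf (2 * t))
  have hg' : ∀ᶠ s in 𝓝 t, dist (g (2 * s - 1)) (g (2 * t - 1)) ≤ ε :=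
    (Continuous.tendsto (by fun_prop : Continuous fun s : ℝ => 2 * s - 1) t).eventually
      (hg (2 * t - 1))
  rcases lt_trichotomy t (1 / 2) with ht | rfl | ht
  · filter_upwards [hf', Iio_mem_nhds ht] with s hs hst
    rwa [concat, concat, if_pos (le_of_lt hst), if_pos ht.le]
  · filter_upwards [hf', hg'] with s hs hs'
    norm_num [hfg] at hs hs'
    unfold concat
    split_ifs <;> norm_num [hfg] <;> assumption
  · filter_upwards [hg', Ioi_mem_nhds ht] with s hs hst
    rwa [concat, concat, if_neg (not_le.2 hst), if_neg (not_le.2 ht)]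

lemma IsStepPath.eventually_dist_le {f : ℝ → X} (hf : IsStepPath ε a b f) (t : ℝ) :
    ∀ᶠ s in 𝓝 t, dist (f s) (f t) ≤ ε := by
  induction hf generalizing t with
  | @link a b h =>
    have hmem := concat_mem (S := {a, b}) (f := fun _ => a) (g := fun _ => b)
      (fun _ => Or.inl rfl) fun _ => Or.inr rfl
    have hpair (u : X) (hu : u ∈ ({a, b} : Set X)) (v : X) (hv : v ∈ ({a, b} : Set X)) :
        dist u v ≤ ε := by
      rcases hu with rfl | rfl <;> rcases hv with rfl | rfl
      exacts [(dist_self _).trans_le h.nonneg, h.dist_le, h.symm.dist_le,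
        (dist_self _).trans_le h.nonneg]
    exact Eventually.of_forall fun s => hpair _ (hmem s) _ (hmem t)
  | trans hf hg ihf ihg =>
    exact eventually_dist_concat_le
      ((hf.apply_of_one_le le_rfl).trans (hg.apply_of_nonpos le_rfl).symm) ihf ihg t

variable [LocallyConnectedSpace X]

lemma exists_isStepPath_of_isPreconnected (hδ : 0 < δ) {S : Set X} (hS : IsPreconnected S)
    (ha : a ∈ S) (hb : b ∈ S) : ∃ f, IsStepPath δ a b f ∧ ∀ t, f t ∈ S := by
  refine hS.induction₂' (fun a b => ∃ f, IsStepPath δ a b f ∧ ∀ t, f t ∈ S) ?_ ?_ ha hb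
  · intro x hx
    filter_upwards [nhdsWithin_le_nhds (eventually_smallLinked hδ x), self_mem_nhdsWithin]
      with y hxy hy
    exact ⟨⟨_, .link hxy, concat_mem (fun _ => hx) fun _ => hy⟩,
      ⟨_, .link hxy.symm, concat_mem (fun _ => hy) fun _ => hx⟩⟩
  · rintro x y z - - - ⟨f, hf, hfS⟩ ⟨g, hg, hgS⟩
    exact ⟨_, hf.trans hg, concat_mem hfS hgS⟩

lemma IsStepPath.exists_refinement (hδ : 0 < δ) {f : ℝ → X} (hf : IsStepPath ε a b f) :
    ∃ g, IsStepPath δ a b g ∧ ∀ t, dist (f t) (g t) ≤ ε := by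
  induction hf with
  | @link a b h =>
    obtain ⟨S, hS, ha, hb, hd⟩ := h
    obtain ⟨g, hg, hgS⟩ := exists_isStepPath_of_isPreconnected hδ hS ha hb
    exact ⟨g, hg, fun t => hd _ (concat_mem (fun _ => ha) (fun _ => hb) t) _ (hgS t)⟩
  | trans _ _ ihf ihg =>
    obtain ⟨f', hf', hff'⟩ := ihf
    obtain ⟨g', hg', hgg'⟩ := ihg
    exact ⟨_, hf'.trans hg', dist_concat_le hff' hgg'⟩

lemma IsStepPath.exists_seq (hε : 0 < ε) {f : ℝ → X} (hf : IsStepPath ε a b f) :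
    ∃ F : ℕ → ℝ → X, F 0 = f ∧ (∀ n, IsStepPath (ε / 2 ^ n) a b (F n)) ∧
      ∀ n t, dist (F n t) (F (n + 1) t) ≤ ε / 2 ^ n := by
  have next (n : ℕ) (g : {g // IsStepPath (ε / 2 ^ n) a b g}) :
      ∃ g' : {g // IsStepPath (ε / 2 ^ (n + 1)) a b g}, ∀ t, dist (g.1 t) (g'.1 t) ≤ ε / 2 ^ n :=
    let ⟨g', hg', hd⟩ := g.2.exists_refinement (by positivity)
    ⟨⟨g', hg'⟩, hd⟩
  choose next hnext using next
  let F (n : ℕ) : {g // IsStepPath (ε / 2 ^ n) a b g} :=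
    Nat.rec ⟨f, by simpa using hf⟩ next n
  exact ⟨fun n => (F n).1, rfl, fun n => (F n).2, fun n => hnext n (F n)⟩

end StepPaths

lemma continuous_of_approx_of_eventually_dist_le {α X : Type*} [TopologicalSpace α]
    [PseudoMetricSpace X] {F : ℕ → α → X} {G : α → X} {e : ℕ → ℝ} (he : Tendsto e atTop (𝓝 0))
    (hFG : ∀ n t, dist (F n t) (G t) ≤ e n)
    (hF : ∀ n t, ∀ᶠ s in 𝓝 t, dist (F n s) (F n t) ≤ e n) : Continuous G := by
  refine continuous_iff_continuousAt.2 fun t => Metric.tendsto_nhds.2 fun δ hδ => ?_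
  obtain ⟨n, hn⟩ := (he.eventually (Iio_mem_nhds (by positivity : 0 < δ / 3))).exists
  filter_upwards [hF n t] with s hs
  replace hn : e n < δ / 3 := hn
  linarith [dist_triangle4 (G s) (F n s) (F n t) (G t), dist_comm (G s) (F n s), hFG n s, hFG n t]

lemma SmallLinked.joinedIn {X : Type*} [MetricSpace X] [CompleteSpace X] [LocallyConnectedSpace X]
    {ε : ℝ} (hε : 0 < ε) {a b : X} (hab : SmallLinked ε a b) :
    JoinedIn (closedBall a (3 * ε)) a b := by
  obtain ⟨F, hF0, hF, hFF⟩ := (IsStepPath.link hab).exists_seq hε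
  have hFF' (t : ℝ) (n : ℕ) : dist (F n t) (F (n + 1) t) ≤ 2 * ε / 2 / 2 ^ n := by
    simpa using hFF n t
  choose G hG using fun t => cauchySeq_tendsto_of_complete (cauchySeq_of_le_geometric_two (hFF' t))
  have hFG (n : ℕ) (t : ℝ) : dist (F n t) (G t) ≤ 2 * ε / 2 ^ n :=
    dist_le_of_le_geometric_two_of_tendsto (hFF' t) (hG t) n
  have hlim : Tendsto (fun n : ℕ => 2 * ε / 2 ^ n) atTop (𝓝 0) :=
    tendsto_const_nhds.div_atTop (tendsto_pow_atTop_atTop_of_one_lt one_lt_two)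
  have hGc : Continuous G := continuous_of_approx_of_eventually_dist_le hlim hFG fun n t =>
    ((hF n).eventually_dist_le t).mono fun s hs => hs.trans (by gcongr; linarith)
  have hG0 : G 0 = a := tendsto_nhds_unique (hG 0) <| by
    simp only [(hF _).apply_of_nonpos le_rfl, tendsto_const_nhds]
  have hG1 : G 1 = b := tendsto_nhds_unique (hG 1) <| by
    simp only [(hF _).apply_of_one_le le_rfl, tendsto_const_nhds]
  refine JoinedIn.ofLine hGc.continuousOn hG0 hG1 ?_
  rintro _ ⟨t, -, rfl⟩
  have hF0a : F 0 t ∈ closedBall a ε := hF0 ▸ concat_mem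
    (fun _ => mem_closedBall_self hε.le) (fun _ => mem_closedBall'.2 hab.dist_le) t
  have hFGt : dist (F 0 t) (G t) ≤ 2 * ε := by simpa using hFG 0 t
  exact mem_closedBall.2 (by linarith [dist_triangle_left (G t) a (F 0 t), mem_closedBall.1 hF0a])

theorem locallyPathConnectedSpace_of_complete {X : Type*} [MetricSpace X] [CompleteSpace X]
    [LocallyConnectedSpace X] : LocallyPathConnectedSpace X := by
  rw [locallyPathConnectedSpace_iff_pathComponentIn_mem_nhds]
  intro x U hU hxU
  obtain ⟨δ, hδ, hδU⟩ := Metric.isOpen_iff.1 hU x hxU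
  filter_upwards [eventually_smallLinked (by positivity : 0 < δ / 4) x] with y hxy
  exact (hxy.joinedIn (by positivity)).mono
    ((closedBall_subset_ball (by linarith)).trans hδU)

section InfiniteConcatenation

variable {X : Type*} [TopologicalSpace X] {p : X}

lemma joinedIn_of_continuousOn_of_tendsto {g : ℝ → X} (hg : ContinuousOn g (Ici 0))
    (hp : Tendsto g atTop (𝓝 p)) : JoinedIn (insert p (g '' Ici 0)) (g 0) p := by
  have hmaps : MapsTo (fun s : ℝ => s⁻¹ - 1) (Icc 0 1 \ {0}) (Ici 0) := fun s hs =>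
    sub_nonneg.2 ((one_le_inv₀ (lt_of_le_of_ne hs.1.1 (Ne.symm hs.2))).2 hs.1.2)
  have hcont : ContinuousOn (Function.update (fun s => g (s⁻¹ - 1)) 0 p) (Icc 0 1) := by
    refine continuousOn_update_iff.2 ⟨hg.comp ?_ hmaps, fun _ => hp.comp ?_⟩
    · exact (continuousOn_inv₀.mono fun s hs => hs.2).sub continuousOn_const
    · have hIoi : 𝓝[Icc (0 : ℝ) 1 \ {0}] 0 ≤ 𝓝[>] 0 :=
        nhdsWithin_mono _ fun s hs => lt_of_le_of_ne hs.1.1 (Ne.symm hs.2)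
      exact tendsto_atTop_add_const_right _ (-1) (tendsto_inv_nhdsGT_zero.mono_left hIoi)
  refine (JoinedIn.ofLine hcont (by simp) (by simp) ?_).symm
  rintro _ ⟨s, hs, rfl⟩
  rcases eq_or_ne s 0 with rfl | hs0
  · simp
  · rw [Function.update_of_ne hs0]
    exact Or.inr ⟨_, hmaps ⟨hs, hs0⟩, rfl⟩

lemma exists_continuousOn_of_forall_joinedIn {x : ℕ → X} {S : ℕ → Set X}
    (hj : ∀ n, JoinedIn (S n) (x n) (x (n + 1))) :
    ∃ g : ℝ → X, ContinuousOn g (Ici 0) ∧ g 0 = x 0 ∧ ∀ t, g t ∈ S ⌊t⌋₊ := by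
  let γ (n : ℕ) : ℝ → X := (hj n).somePath.extend
  have hγ0 (n : ℕ) : γ n 0 = x n := (hj n).somePath.extend_zero
  have hγ1 (n : ℕ) : γ n 1 = x (n + 1) := (hj n).somePath.extend_one
  let g (t : ℝ) : X := γ ⌊t⌋₊ (t - ⌊t⌋₊)
  have hgγ (n : ℕ) : EqOn g (fun t => γ n (t - n)) (Icc (n : ℝ) (n + 1)) := by
    rintro t ⟨hnt, htn⟩
    rcases htn.lt_or_eq with htn | rfl
    · simp only [g, (Nat.floor_eq_iff (n.cast_nonneg.trans hnt)).2 ⟨hnt, htn⟩]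
    · have hfloor : ⌊(n : ℝ) + 1⌋₊ = n + 1 := mod_cast Nat.floor_natCast (n + 1)
      simp [g, hfloor, hγ0, hγ1]
  have hlf : LocallyFinite fun n : ℕ => Icc (n : ℝ) (n + 1) := fun t => by
    refine ⟨Iio (⌈t⌉₊ + 1 : ℝ), Iio_mem_nhds ((Nat.le_ceil t).trans_lt (lt_add_one _)),
      (finite_Iic (⌈t⌉₊ + 1)).subset ?_⟩
    rintro n ⟨s, ⟨hns, -⟩, hst⟩
    exact_mod_cast hns.trans (le_of_lt hst)
  have hgc : ContinuousOn g (⋃ n : ℕ, Icc (n : ℝ) (n + 1)) :=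
    hlf.continuousOn_iUnion (fun _ => isClosed_Icc) fun n =>
      ((hj n).somePath.continuous_extend.comp
        (continuous_id.sub continuous_const)).continuousOn.congr (hgγ n)
  refine ⟨g, hgc.mono fun t ht => mem_iUnion.2
    ⟨⌊t⌋₊, Nat.floor_le ht, (Nat.lt_floor_add_one t).le⟩, by simp [g, hγ0], fun t => ?_⟩
  exact (hj _).somePath_mem _

lemma joinedIn_iUnion_of_tendsto_smallSets {x : ℕ → X} {S : ℕ → Set X}
    (hS : Tendsto S atTop (𝓝 p).smallSets) (hj : ∀ n, JoinedIn (S n) (x n) (x (n + 1))) :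
    JoinedIn (insert p (⋃ n, S n)) (x 0) p := by
  obtain ⟨g, hgc, hg0, hgS⟩ := exists_continuousOn_of_forall_joinedIn hj
  have hgp : Tendsto g atTop (𝓝 p) :=
    (hS.comp tendsto_nat_floor_atTop).of_smallSets (Eventually.of_forall hgS)
  rw [← hg0]
  refine (joinedIn_of_continuousOn_of_tendsto hgc hgp).mono (insert_subset_insert ?_)
  rintro _ ⟨t, -, rfl⟩
  exact mem_iUnion.2 ⟨_, hgS t⟩

end InfiniteConcatenation

/-- A closed subset of the unit interval, containing the end points, such that `f` takes the
same value at both ends of each complementary gap. A path restricted to a minimal such set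
becomes an arc once the gaps are collapsed. -/
structure GapCollapsing {X : Type*} (f : ℝ → X) (K : Set ℝ) : Prop where
  isClosed : IsClosed K
  subset_Icc : K ⊆ Icc 0 1
  zero_mem : 0 ∈ K
  one_mem : 1 ∈ K
  apply_eq : ∀ s ∈ K, ∀ t ∈ K, s < t → Disjoint (Ioo s t) K → f s = f t

namespace GapCollapsing

lemma isCompact {X : Type*} {f : ℝ → X} {K : Set ℝ} (hK : GapCollapsing f K) : IsCompact K :=
  isCompact_Icc.of_isClosed_subset hK.isClosed hK.subset_Icc

lemma Icc_zero_one {X : Type*} (f : ℝ → X) : GapCollapsing f (Icc 0 1) where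
  isClosed := isClosed_Icc
  subset_Icc := Subset.rfl
  zero_mem := left_mem_Icc.2 zero_le_one
  one_mem := right_mem_Icc.2 zero_le_one
  apply_eq s hs t ht hst hgap := by
    obtain ⟨r, hsr, hrt⟩ := exists_between hst
    exact (hgap.le_bot ⟨⟨hsr, hrt⟩, hs.1.trans hsr.le, hrt.le.trans ht.2⟩).elim

variable {X : Type*} [TopologicalSpace X] {f : ℝ → X} {K : Set ℝ}

lemma exists_mem_inter (hK : GapCollapsing f K) (hf : ContinuousOn f K) {s t : ℝ} (hs : s ∈ K)
    (ht : t ∈ K) (hst : s ≤ t) {U V : Set X} (hU : IsOpen U) (hV : IsOpen V)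
    (hUV : f '' (K ∩ Icc s t) ⊆ U ∪ V) (hsU : f s ∈ U) (htV : f t ∈ V) :
    ∃ k ∈ K ∩ Icc s t, f k ∈ U ∩ V := by
  by_contra! hdisj
  have hcompact {r : ℝ} {W : Set X} (hW : IsOpen W) : IsCompact (Icc s r ∩ (K ∩ f ⁻¹' Wᶜ)) :=
    isCompact_Icc.inter_right (hf.preimage_isClosed_of_isClosed hK.isClosed hW.isClosed_compl)
  obtain ⟨t', ⟨⟨hst', ht't⟩, ht'K, ht'U⟩, ht'min⟩ := (hcompact hU).exists_isLeast
    ⟨t, ⟨hst, le_rfl⟩, ht, fun htU => hdisj t ⟨ht, hst, le_rfl⟩ ⟨htU, htV⟩⟩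
  obtain ⟨s', ⟨⟨hss', hs't'⟩, hs'K, hs'V⟩, hs'max⟩ := (hcompact hV).exists_isGreatest
    ⟨s, ⟨le_rfl, hst'⟩, hs, fun hsV => hdisj s ⟨hs, le_rfl, hst⟩ ⟨hsU, hsV⟩⟩
  have hs'U : f s' ∈ U := (hUV ⟨s', ⟨hs'K, hss', hs't'.trans ht't⟩, rfl⟩).resolve_right hs'V
  refine ht'U (hK.apply_eq s' hs'K t' ht'K (hs't'.lt_of_ne ?_) ?_ ▸ hs'U)
  · rintro rfl
    exact ht'U hs'U
  · refine disjoint_left.2 fun z ⟨hs'z, hzt'⟩ hzK => ?_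
    have hsz := hss'.trans hs'z.le
    have hzt := hzt'.le.trans ht't
    by_cases hzU : f z ∈ U
    · have hzV : f z ∉ V := fun hzV => hdisj z ⟨hzK, hsz, hzt⟩ ⟨hzU, hzV⟩
      exact hs'z.not_ge (hs'max ⟨⟨hsz, hzt'.le⟩, hzK, hzV⟩)
    · exact hzt'.not_ge (ht'min ⟨⟨hsz, hzt⟩, hzK, hzU⟩)

lemma isPreconnected_image (hK : GapCollapsing f K) (hf : ContinuousOn f K) (s t : ℝ) :
    IsPreconnected (f '' (K ∩ Icc s t)) := by
  rintro U V hU hV hUV ⟨_, ⟨k, ⟨hk, hkst⟩, rfl⟩, hkU⟩ ⟨_, ⟨l, ⟨hl, hlst⟩, rfl⟩, hlV⟩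
  wlog hkl : k ≤ l generalizing U V k l
  · rw [inter_comm U V]
    exact this V U hV hU (by rwa [union_comm]) l hl hlst hlV k hk hkst hkU (le_of_not_ge hkl)
  have hsub : K ∩ Icc k l ⊆ K ∩ Icc s t := inter_subset_inter_right _ (Icc_subset_Icc hkst.1 hlst.2)
  obtain ⟨r, hr, hrUV⟩ := hK.exists_mem_inter hf hk hl hkl hU hV ((image_mono hsub).trans hUV)
    hkU hlV
  exact ⟨f r, ⟨r, hsub hr, rfl⟩, hrUV⟩

lemma sInter [T2Space X] (hf : Continuous f) {c : Set (Set ℝ)} (hc : IsChain (· ⊆ ·) c)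
    (hne : c.Nonempty) (hcK : ∀ K ∈ c, GapCollapsing f K) : GapCollapsing f (⋂₀ c) where
  isClosed := isClosed_sInter fun K hK => (hcK K hK).isClosed
  subset_Icc := hne.elim fun K hK => (sInter_subset_of_mem hK).trans (hcK K hK).subset_Icc
  zero_mem K hK := (hcK K hK).zero_mem
  one_mem K hK := (hcK K hK).one_mem
  apply_eq s hs t ht hst hgap := by
    by_contra hfst
    obtain ⟨U, V, hU, hV, hsU, htV, hUV⟩ := t2_separation hfst
    have : Nonempty c := hne.to_subtype
    have hdir : Directed (· ⊇ ·) fun K : c => K.1 ∩ Icc s t := fun K L =>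
      (hc.total K.2 L.2).elim (fun h => ⟨K, Subset.rfl, inter_subset_inter_left _ h⟩)
        fun h => ⟨L, inter_subset_inter_left _ h, Subset.rfl⟩
    obtain ⟨K, hKUV⟩ := exists_subset_nhds_of_isCompact' hdir
      (fun K => (hcK K K.2).isCompact.inter_right isClosed_Icc)
      (fun K => (hcK K K.2).isClosed.inter isClosed_Icc)
      (U := f ⁻¹' (U ∪ V)) fun z hz => ((hU.union hV).preimage hf).mem_nhds <| by
        have hz' := mem_iInter.1 hz
        have hzst : z ∈ Icc s t := (hz' (Classical.arbitrary c)).2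
        rcases hzst.1.eq_or_lt with rfl | hsz
        · exact Or.inl hsU
        rcases hzst.2.eq_or_lt with rfl | hzt
        · exact Or.inr htV
        exact (hgap.le_bot ⟨⟨hsz, hzt⟩, fun L hL => (hz' ⟨L, hL⟩).1⟩).elim
    obtain ⟨k, -, hkUV⟩ := (hcK K K.2).exists_mem_inter hf.continuousOn (hs K K.2) (ht K K.2)
      hst.le hU hV (image_subset_iff.2 hKUV) hsU htV
    exact hUV.le_bot hkUV

lemma exists_minimal [T2Space X] (hf : Continuous f) : ∃ K, Minimal (GapCollapsing f) K := by
  obtain ⟨K, -, hK⟩ := zorn_superset_nonempty {K | GapCollapsing f K}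
    (fun c hcK hc hne => ⟨⋂₀ c, sInter hf hc hne fun K hK => hcK hK,
      fun K hK => sInter_subset_of_mem hK⟩) _ (Icc_zero_one f)
  exact ⟨K, hK⟩

end GapCollapsing

section MinimalGapCollapsing

variable {X : Type*} {f : ℝ → X} {K : Set ℝ} {s t : ℝ}

lemma GapCollapsing.sdiff_Ioo (hK : GapCollapsing f K) (hs : s ∈ K) (ht : t ∈ K)
    (hf : f s = f t) : GapCollapsing f (K \ Ioo s t) where
  isClosed := hK.isClosed.sdiff isOpen_Ioo
  subset_Icc := sdiff_subset.trans hK.subset_Icc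
  zero_mem := ⟨hK.zero_mem, fun h => h.1.not_ge (hK.subset_Icc hs).1⟩
  one_mem := ⟨hK.one_mem, fun h => h.2.not_ge (hK.subset_Icc ht).2⟩
  apply_eq p hp q hq hpq hgap := by
    by_cases hpqK : Disjoint (Ioo p q) K
    · exact hK.apply_eq p hp.1 q hq.1 hpq hpqK
    obtain ⟨k, hkpq, hkK⟩ := not_disjoint_iff.1 hpqK
    have hnot (z : ℝ) (hz : z ∈ K) (hzst : z ∉ Ioo s t) : z ∉ Ioo p q := fun h =>
      hgap.le_bot ⟨h, hz, hzst⟩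
    have hkst : k ∈ Ioo s t := by
      by_contra h
      exact hnot k hkK h hkpq
    have hps : p ≤ s := not_lt.1 fun h => hp.2 ⟨h, hkpq.1.trans hkst.2⟩
    have htq : t ≤ q := not_lt.1 fun h => hq.2 ⟨hkst.1.trans hkpq.2, h⟩
    have hsp : s ≤ p := not_lt.1 fun h =>
      hnot s hs (fun h => lt_irrefl _ h.1) ⟨h, hkst.1.trans hkpq.2⟩
    have hqt : q ≤ t := not_lt.1 fun h =>
      hnot t ht (fun h => lt_irrefl _ h.2) ⟨hkpq.1.trans hkst.2, h⟩
    rw [hps.antisymm hsp, hqt.antisymm htq, hf]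

lemma disjoint_Ioo_of_minimal_gapCollapsing (hK : Minimal (GapCollapsing f) K) (hs : s ∈ K)
    (ht : t ∈ K) (hf : f s = f t) : Disjoint (Ioo s t) K :=
  disjoint_left.2 fun _ hk hkK => (hK.2 (hK.1.sdiff_Ioo hs ht hf) sdiff_subset hkK).2 hk

lemma image_inter_Iic_eq_iff (hK : Minimal (GapCollapsing f) K) (hs : s ∈ K) (ht : t ∈ K)
    (hst : s ≤ t) : f '' (K ∩ Iic s) = f '' (K ∩ Iic t) ↔ f s = f t := by
  constructor
  · intro h
    obtain ⟨j, ⟨hj, hjs : j ≤ s⟩, hjt⟩ := h.symm.subset ⟨t, ⟨ht, self_mem_Iic⟩, rfl⟩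
    rcases hst.eq_or_lt with rfl | hst
    · rfl
    rcases hjs.eq_or_lt with rfl | hjs
    · exact hjt
    · exact ((disjoint_Ioo_of_minimal_gapCollapsing hK hj ht hjt).le_bot ⟨⟨hjs, hst⟩, hs⟩).elim
  · intro h
    refine (image_mono (inter_subset_inter_right _ (Iic_subset_Iic.2 hst))).antisymm ?_
    rintro _ ⟨j, ⟨hj, hjt : j ≤ t⟩, rfl⟩
    rcases le_or_gt j s with hjs | hsj
    · exact ⟨j, ⟨hj, hjs⟩, rfl⟩
    rcases hjt.eq_or_lt with rfl | hjt
    · exact ⟨s, ⟨hs, self_mem_Iic⟩, h⟩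
    · exact ((disjoint_Ioo_of_minimal_gapCollapsing hK hs ht h).le_bot ⟨⟨hsj, hjt⟩, hj⟩).elim

end MinimalGapCollapsing

section WhitneyFunctional

variable {X : Type*} [PseudoMetricSpace X] {A B : Set X} {q : ℕ → X}

/-- A Whitney functional: on nonempty sets it is continuous for the Hausdorff distance, and on
nonempty closed subsets of the closure of `range q` it is strictly decreasing. Distances are
truncated at `1` so that the series converges on unbounded spaces. -/
noncomputable def whitney (q : ℕ → X) (A : Set X) : ℝ :=
  ∑' n, min 1 (infDist (q n) A) / 2 / 2 ^ n

lemma summable_whitney (q : ℕ → X) (A : Set X) :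
    Summable fun n => min 1 (infDist (q n) A) / 2 / 2 ^ n := by
  refine Summable.of_nonneg_of_le (fun n => ?_) (fun n => ?_) (summable_geometric_two' 1)
  · have : 0 ≤ min 1 (infDist (q n) A) := le_min zero_le_one infDist_nonneg
    positivity
  · gcongr
    exact min_le_left _ _

lemma whitney_le_add {ε : ℝ} (hA : A.Nonempty) (h : ∀ a ∈ A, ∃ b ∈ B, dist a b ≤ ε) :
    whitney q B ≤ whitney q A + ε := by
  obtain ⟨a₀, ha₀⟩ := hA
  obtain ⟨b₀, -, hab₀⟩ := h a₀ ha₀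
  have hε : 0 ≤ ε := dist_nonneg.trans hab₀
  have hinf (x : X) : infDist x B ≤ infDist x A + ε := by
    rw [← sub_le_iff_le_add, le_infDist ⟨a₀, ha₀⟩]
    intro a ha
    obtain ⟨b, hb, hab⟩ := h a ha
    linarith [dist_triangle x a b, infDist_le_dist_of_mem (x := x) hb]
  refine hasSum_le (fun n => ?_) (summable_whitney q B).hasSum
    ((summable_whitney q A).hasSum.add (hasSum_geometric_two' ε))
  rw [← add_div, ← add_div]
  gcongr
  rw [← min_add_add_right]
  exact min_le_min (by linarith) (hinf _)

lemma whitney_anti (hA : A.Nonempty) (hAB : A ⊆ B) : whitney q B ≤ whitney q A := by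
  simpa using whitney_le_add (q := q) hA fun a ha => ⟨a, hAB ha, (dist_self a).le⟩

lemma whitney_lt_of_ssubset (hA : A.Nonempty) (hAc : IsClosed A) (hAB : A ⊂ B)
    (hBq : B ⊆ closure (range q)) : whitney q B < whitney q A := by
  obtain ⟨b, hb, hbA⟩ := exists_of_ssubset hAB
  have hle (x : X) : min 1 (infDist x B) ≤ min 1 (infDist x A) :=
    min_le_min_left 1 (infDist_le_infDist_of_subset hAB.subset hA)
  have hlt : min 1 (infDist b B) < min 1 (infDist b A) := by
    rw [infDist_zero_of_mem hb, min_eq_right zero_le_one]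
    exact lt_min one_pos ((hAc.notMem_iff_infDist_pos hA).1 hbA)
  obtain ⟨_, hn : min 1 (infDist _ B) < min 1 (infDist _ A), n, rfl⟩ :=
    mem_closure_iff.1 (hBq hb) _ (isOpen_lt (continuous_const.min (continuous_infDist_pt B))
      (continuous_const.min (continuous_infDist_pt A))) hlt
  refine (summable_whitney q B).tsum_lt_tsum (i := n) (fun k => ?_) (by gcongr)
    (summable_whitney q A)
  have := hle (q k)
  dsimp only
  gcongr

lemma whitney_image_inter_Iic_le {f : ℝ → X} {K : Set ℝ} {s t ε : ℝ} (hs : s ∈ K) (ht : t ∈ K)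
    (hε : 0 ≤ ε) (hf : ∀ j ∈ K, s < j → j ≤ t → dist (f j) (f s) ≤ ε) :
    whitney q (f '' (K ∩ Iic s)) ≤ whitney q (f '' (K ∩ Iic t)) + ε := by
  refine whitney_le_add ⟨_, t, ⟨ht, self_mem_Iic⟩, rfl⟩ ?_
  rintro _ ⟨j, ⟨hj, hjt⟩, rfl⟩
  rcases le_or_gt j s with hjs | hsj
  · exact ⟨f j, ⟨j, ⟨hj, hjs⟩, rfl⟩, (dist_self _).trans_le hε⟩
  · exact ⟨f s, ⟨s, ⟨hs, self_mem_Iic⟩, rfl⟩, hf j hj hsj hjt⟩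

lemma antitoneOn_whitney_image_inter_Iic (f : ℝ → X) (K : Set ℝ) :
    AntitoneOn (fun s => whitney q (f '' (K ∩ Iic s))) K := fun s hs _ _ hst =>
  whitney_anti ⟨f s, s, ⟨hs, self_mem_Iic⟩, rfl⟩
    (image_mono (inter_subset_inter_right K (Iic_subset_Iic.2 hst)))

lemma continuousOn_whitney_image_inter_Iic {f : ℝ → X} {K : Set ℝ} (hK : IsCompact K)
    (hf : ContinuousOn f K) : ContinuousOn (fun s => whitney q (f '' (K ∩ Iic s))) K := by
  refine Metric.continuousOn_iff.2 fun s hs ε hε => ?_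
  have hanti := antitoneOn_whitney_image_inter_Iic (q := q) f K
  obtain ⟨δ, hδ, hfδ⟩ := Metric.uniformContinuousOn_iff.1
    (hK.uniformContinuousOn_of_continuous hf) (ε / 2) (by positivity)
  have hosc {s t : ℝ} (hs : s ∈ K) (ht : t ∈ K) (htδ : t < s + δ) :
      whitney q (f '' (K ∩ Iic s)) ≤ whitney q (f '' (K ∩ Iic t)) + ε / 2 := by
    refine whitney_image_inter_Iic_le hs ht (by positivity) fun j hj hsj hjt =>
      (hfδ j hj s hs ?_).le
    rw [Real.dist_eq, abs_lt]
    constructor <;> linarith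
  refine ⟨δ, hδ, fun t ht hts => ?_⟩
  rw [Real.dist_eq, abs_lt] at hts ⊢
  rcases le_total s t with hst | hts'
  · have h₁ := hanti hs ht hst
    have h₂ := hosc hs ht (by linarith)
    constructor <;> linarith
  · have h₁ := hanti ht hs hts'
    have h₂ := hosc ht hs (by linarith)
    constructor <;> linarith

end WhitneyFunctional

lemma exists_monotoneOn_eq_iff {X : Type*} [MetricSpace X] {f : ℝ → X} (hf : Continuous f)
    {K : Set ℝ} (hK : Minimal (GapCollapsing f) K) :
    ∃ φ : ℝ → ℝ, MonotoneOn φ K ∧ ContinuousOn φ K ∧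
      ∀ s ∈ K, ∀ t ∈ K, φ s = φ t ↔ f s = f t := by
  let q : ℕ → X := f ∘ TopologicalSpace.denseSeq ℝ
  have hq (A : Set ℝ) : f '' A ⊆ closure (range q) := (image_subset_range f A).trans <| by
    rw [range_comp]
    exact hf.range_subset_closure_image_dense (TopologicalSpace.denseRange_denseSeq ℝ)
  let E (s : ℝ) : Set X := f '' (K ∩ Iic s)
  have hmem {s : ℝ} (hs : s ∈ K) : f s ∈ E s := ⟨s, ⟨hs, self_mem_Iic⟩, rfl⟩
  have hEmono : Monotone E := fun s t hst =>
    image_mono (inter_subset_inter_right _ (Iic_subset_Iic.2 hst))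
  have hEclosed (s : ℝ) : IsClosed (E s) :=
    ((hK.1.isCompact.inter_right isClosed_Iic).image hf).isClosed
  have hiff {s t : ℝ} (hs : s ∈ K) (ht : t ∈ K) (hst : s ≤ t) :
      -whitney q (E s) = -whitney q (E t) ↔ f s = f t := by
    rw [← image_inter_Iic_eq_iff hK hs ht hst, neg_inj]
    exact ⟨fun h => (hEmono hst).eq_of_not_ssubset fun hlt =>
      (whitney_lt_of_ssubset ⟨_, hmem hs⟩ (hEclosed s) hlt (hq _)).ne' h, congrArg _⟩
  exact ⟨fun s => -whitney q (E s), (antitoneOn_whitney_image_inter_Iic f K).neg,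
    (continuousOn_whitney_image_inter_Iic hK.1.isCompact hf.continuousOn).neg,
    fun s hs t ht => (le_total s t).elim (hiff hs ht) fun hts =>
      eq_comm.trans ((hiff ht hs hts).trans eq_comm)⟩

lemma exists_continuousOn_image_of_factorsThrough {α β γ : Type*} [Nonempty α] [TopologicalSpace α]
    [TopologicalSpace β] [T2Space β] [TopologicalSpace γ] {K : Set α} {φ : α → β} {f : α → γ}
    (hK : IsCompact K) (hφ : ContinuousOn φ K) (hf : ContinuousOn f K)
    (h : ∀ s ∈ K, ∀ t ∈ K, φ s = φ t → f s = f t) :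
    ∃ g : β → γ, ContinuousOn g (φ '' K) ∧ ∀ k ∈ K, g (φ k) = f k := by
  let g (y : β) : γ := f (Function.invFunOn φ K y)
  have hg (k : α) (hk : k ∈ K) : g (φ k) = f k :=
    h _ (Function.invFunOn_mem ⟨k, hk, rfl⟩) k hk (Function.invFunOn_eq ⟨k, hk, rfl⟩)
  refine ⟨g, continuousOn_iff_isClosed.2 fun C hC => ?_, hg⟩
  obtain ⟨D, hD, hfD⟩ := continuousOn_iff_isClosed.1 hf C hC
  refine ⟨φ '' (K ∩ D), ((hK.inter_right hD).image_of_continuousOn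
    (hφ.mono inter_subset_left)).isClosed, ?_⟩
  have hCD {k : α} (hk : k ∈ K) : f k ∈ C ↔ k ∈ D := by
    simpa [hk] using congrArg (k ∈ ·) hfD
  ext y
  constructor
  · rintro ⟨hy, k, hk, rfl⟩
    exact ⟨⟨k, ⟨hk, (hCD hk).1 (hg k hk ▸ hy)⟩, rfl⟩, k, hk, rfl⟩
  · rintro ⟨⟨k, ⟨hk, hkD⟩, rfl⟩, hy⟩
    exact ⟨mem_preimage.2 ((hg k hk).symm ▸ (hCD hk).2 hkD), hy⟩

lemma image_eq_Icc_of_monotoneOn {f : ℝ → ℝ} {K : Set ℝ} (hK : GapCollapsing f K)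
    (hf : ContinuousOn f K) (hmono : MonotoneOn f K) : f '' K = Icc (f 0) (f 1) := by
  refine Subset.antisymm ?_ ?_
  · rintro _ ⟨k, hk, rfl⟩
    exact ⟨hmono hK.zero_mem hk (hK.subset_Icc hk).1, hmono hk hK.one_mem (hK.subset_Icc hk).2⟩
  · have hconn := hK.isPreconnected_image hf 0 1
    rw [inter_eq_left.2 hK.subset_Icc] at hconn
    exact hconn.Icc_subset ⟨0, hK.zero_mem, rfl⟩ ⟨1, hK.one_mem, rfl⟩

/-- `A` is an arc with end points `a` and `b`. Parametrising by an arbitrary interval of the line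
spares rescaling when arcs are cut and glued. -/
def IsArc {X : Type*} [TopologicalSpace X] (A : Set X) (a b : X) : Prop :=
  ∃ (f : ℝ → X) (u v : ℝ), u < v ∧ ContinuousOn f (Icc u v) ∧ InjOn f (Icc u v) ∧
    f u = a ∧ f v = b ∧ f '' Icc u v = A

theorem exists_isArc_of_joinedIn {X : Type*} [MetricSpace X] {S : Set X} {a b : X}
    (h : JoinedIn S a b) (hab : a ≠ b) : ∃ A ⊆ S, IsArc A a b := by
  let f : ℝ → X := h.somePath.extend
  have hf : Continuous f := h.somePath.continuous_extend
  have hf0 : f 0 = a := h.somePath.extend_zero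
  have hf1 : f 1 = b := h.somePath.extend_one
  obtain ⟨K, hK⟩ := GapCollapsing.exists_minimal hf
  obtain ⟨φ, hφm, hφc, hφf⟩ := exists_monotoneOn_eq_iff hf hK
  have hφK : φ '' K = Icc (φ 0) (φ 1) := by
    refine image_eq_Icc_of_monotoneOn ⟨hK.1.isClosed, hK.1.subset_Icc, hK.1.zero_mem, hK.1.one_mem,
      fun s hs t ht hst hgap => ?_⟩ hφc hφm
    exact (hφf s hs t ht).2 (hK.1.apply_eq s hs t ht hst hgap)
  have h01 : φ 0 < φ 1 := by
    refine (hφm hK.1.zero_mem hK.1.one_mem zero_le_one).lt_of_ne fun h01 => hab ?_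
    rw [← hf0, ← hf1, (hφf 0 hK.1.zero_mem 1 hK.1.one_mem).1 h01]
  obtain ⟨g, hgc, hgf⟩ := exists_continuousOn_image_of_factorsThrough hK.1.isCompact hφc
    hf.continuousOn fun s hs t ht => (hφf s hs t ht).1
  rw [hφK] at hgc
  refine ⟨g '' Icc (φ 0) (φ 1), ?_, g, φ 0, φ 1, h01, hgc, ?_,
    (hgf 0 hK.1.zero_mem).trans hf0, (hgf 1 hK.1.one_mem).trans hf1, rfl⟩ <;> rw [← hφK]
  · rintro _ ⟨_, ⟨k, hk, rfl⟩, rfl⟩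
    rw [hgf k hk]
    exact h.somePath_mem _
  · rintro _ ⟨k, hk, rfl⟩ _ ⟨l, hl, rfl⟩ hkl
    rw [hgf k hk, hgf l hl] at hkl
    exact (hφf k hk l hl).2 hkl

namespace IsArc

variable {X : Type*} [TopologicalSpace X] {A B : Set X} {a b c d : X}

lemma symm (h : IsArc A a b) : IsArc A b a := by
  obtain ⟨f, u, v, huv, hc, hi, ha, hb, rfl⟩ := h
  have hmaps : MapsTo (fun t : ℝ => -t) (Icc (-v) (-u)) (Icc u v) := fun t ht =>
    ⟨by linarith [ht.2], by linarith [ht.1]⟩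
  refine ⟨fun t => f (-t), -v, -u, neg_lt_neg huv, hc.comp continuous_neg.continuousOn hmaps,
    hi.comp neg_injective.injOn hmaps, by simpa using hb, by simpa using ha, ?_⟩
  rw [← image_image f (fun t : ℝ => -t), image_neg_Icc, neg_neg, neg_neg]

lemma left_mem (h : IsArc A a b) : a ∈ A := by
  obtain ⟨f, u, v, huv, -, -, ha, -, rfl⟩ := h
  exact ⟨u, left_mem_Icc.2 huv.le, ha⟩

lemma right_mem (h : IsArc A a b) : b ∈ A := h.symm.left_mem

lemma ne (h : IsArc A a b) : a ≠ b := by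
  obtain ⟨f, u, v, huv, -, hi, rfl, rfl, -⟩ := h
  exact fun h => huv.ne (hi (left_mem_Icc.2 huv.le) (right_mem_Icc.2 huv.le) h)

lemma nontrivial (h : IsArc A a b) : A.Nontrivial := ⟨a, h.left_mem, b, h.right_mem, h.ne⟩

lemma isCompact (h : IsArc A a b) : IsCompact A := by
  obtain ⟨f, u, v, -, hc, -, -, -, rfl⟩ := h
  exact isCompact_Icc.image_of_continuousOn hc

lemma isClosed [T2Space X] (h : IsArc A a b) : IsClosed A := h.isCompact.isClosed

lemma isPreconnected (h : IsArc A a b) : IsPreconnected A := by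
  obtain ⟨f, u, v, -, hc, -, -, -, rfl⟩ := h
  exact isPreconnected_Icc.image f hc

lemma image {f : ℝ → X} {u v s t : ℝ} (hc : ContinuousOn f (Icc u v)) (hi : InjOn f (Icc u v))
    (hus : u ≤ s) (hst : s < t) (htv : t ≤ v) : IsArc (f '' Icc s t) (f s) (f t) :=
  have hsub := Icc_subset_Icc hus htv
  ⟨f, s, t, hst, hc.mono hsub, hi.mono hsub, rfl, rfl, rfl⟩

lemma exists_param (h : IsArc A a b) {p q : ℝ} (hpq : p < q) :
    ∃ f : ℝ → X, ContinuousOn f (Icc p q) ∧ InjOn f (Icc p q) ∧ f p = a ∧ f q = b ∧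
      f '' Icc p q = A := by
  obtain ⟨f, u, v, huv, hc, hi, rfl, rfl, rfl⟩ := h
  let r : ℝ := (v - u) / (q - p)
  let σ (t : ℝ) : ℝ := r * t + (u - r * p)
  have hr : 0 < r := div_pos (sub_pos.2 huv) (sub_pos.2 hpq)
  have hσp : σ p = u := by simp [σ]
  have hσq : σ q = v := by
    have hrqp : r * (q - p) = v - u := div_mul_cancel₀ _ (sub_pos.2 hpq).ne'
    simp only [σ]
    linarith
  have himg : σ '' Icc p q = Icc u v := by
    rw [← hσp, ← hσq]
    exact image_affine_Icc' hr _ p q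
  have hmaps : MapsTo σ (Icc p q) (Icc u v) := himg ▸ mapsTo_image σ _
  have hσi : Function.Injective σ := fun s t hst =>
    mul_left_cancel₀ hr.ne' (add_right_cancel hst)
  exact ⟨f ∘ σ, hc.comp (by fun_prop) hmaps, hi.comp hσi.injOn hmaps, by simp [hσp], by simp [hσq],
    by rw [image_comp, himg]⟩

lemma joinedIn (h : IsArc A a b) : JoinedIn A a b := by
  obtain ⟨f, hc, -, ha, hb, rfl⟩ := h.exists_param (zero_lt_one (α := ℝ))
  exact JoinedIn.ofLine hc ha hb Subset.rfl

lemma exists_ne_endpoints (h : IsArc A a b) : ∃ c ∈ A, c ≠ a ∧ c ≠ b := by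
  obtain ⟨f, -, hi, rfl, rfl, rfl⟩ := h.exists_param (show (-1 : ℝ) < 1 by norm_num)
  have hmid : (0 : ℝ) ∈ Icc (-1 : ℝ) 1 := by norm_num
  exact ⟨f 0, ⟨0, hmid, rfl⟩, hi.ne hmid (by norm_num) (by norm_num),
    hi.ne hmid (by norm_num) (by norm_num)⟩

lemma split (h : IsArc A a b) (hcA : c ∈ A) (hca : c ≠ a) (hcb : c ≠ b) :
    ∃ A₁ A₂, IsArc A₁ a c ∧ IsArc A₂ c b ∧ A₁ ∪ A₂ = A ∧ A₁ ∩ A₂ = {c} := by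
  obtain ⟨f, u, v, -, hc, hi, rfl, rfl, rfl⟩ := h
  obtain ⟨t, ht, rfl⟩ := hcA
  have hut : u < t := lt_of_le_of_ne ht.1 fun h => hca (by rw [h])
  have htv : t < v := lt_of_le_of_ne ht.2 fun h => hcb (by rw [h])
  refine ⟨_, _, image hc hi le_rfl hut htv.le, image hc hi hut.le htv le_rfl, ?_, ?_⟩
  · rw [← image_union, Icc_union_Icc_eq_Icc hut.le htv.le]
  · rw [← hi.image_inter (Icc_subset_Icc_right htv.le) (Icc_subset_Icc_left hut.le),
      Icc_inter_Icc_eq_singleton hut.le htv.le, image_singleton]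

lemma exists_subarc (h : IsArc A a b) (hc : c ∈ A) (hd : d ∈ A) (hcd : c ≠ d) :
    ∃ B ⊆ A, IsArc B c d := by
  obtain ⟨f, u, v, -, hfc, hfi, rfl, rfl, rfl⟩ := h
  obtain ⟨s, hs, rfl⟩ := hc
  obtain ⟨t, ht, rfl⟩ := hd
  rcases lt_or_gt_of_ne (fun h : s = t => hcd (by rw [h])) with hst | hts
  · exact ⟨_, image_mono (Icc_subset_Icc hs.1 ht.2), image hfc hfi hs.1 hst ht.2⟩
  · exact ⟨_, image_mono (Icc_subset_Icc ht.1 hs.2), (image hfc hfi ht.1 hts hs.2).symm⟩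

lemma exists_disjoint_ends (h : IsArc A a b) (hc : c ∈ A) (hca : c ≠ a) (hcb : c ≠ b)
    (hd : d ∈ A) (hda : d ≠ a) (hdb : d ≠ b) (hcd : c ≠ d) :
    (∃ A₁ ⊆ A, ∃ A₂ ⊆ A, IsArc A₁ a c ∧ IsArc A₂ d b ∧ Disjoint A₁ A₂) ∨
      ∃ A₁ ⊆ A, ∃ A₂ ⊆ A, IsArc A₁ a d ∧ IsArc A₂ c b ∧ Disjoint A₁ A₂ := by
  obtain ⟨A₁, A₂, hA₁, hA₂, rfl, hinter⟩ := h.split hc hca hcb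
  rcases hd with hd | hd
  · obtain ⟨B₁, B₂, hB₁, hB₂, rfl, hB⟩ := hA₁.split hd hda hcd.symm
    have hcB₁ : c ∉ B₁ := fun h => hcd (hB.subset ⟨h, hB₂.right_mem⟩)
    refine Or.inr ⟨B₁, by grind, A₂, subset_union_right, hB₁, hA₂,
      disjoint_left.2 fun z h₁ h₂ => ?_⟩
    obtain rfl : z = c := hinter.subset ⟨Or.inl h₁, h₂⟩
    exact hcB₁ h₁
  · obtain ⟨B₁, B₂, hB₁, hB₂, rfl, hB⟩ := hA₂.split hd hcd.symm hdb
    have hcB₂ : c ∉ B₂ := fun h => hcd (hB.subset ⟨hB₁.left_mem, h⟩)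
    refine Or.inl ⟨A₁, subset_union_left, B₂, by grind, hA₁, hB₂,
      disjoint_left.2 fun z h₁ h₂ => ?_⟩
    obtain rfl : z = c := hinter.subset ⟨h₁, Or.inr h₂⟩
    exact hcB₂ h₂

lemma exists_first_hit (h : IsArc A a b) {F : Set X} (hF : IsClosed F) (hne : (A ∩ F).Nonempty)
    (ha : a ∉ F) : ∃ c ∈ F, ∃ A₁ ⊆ A, IsArc A₁ a c ∧ A₁ ∩ F = {c} := by
  obtain ⟨f, u, v, -, hfc, hfi, rfl, rfl, rfl⟩ := h
  obtain ⟨_, ⟨t₀, ht₀, rfl⟩, ht₀F⟩ := hne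
  have hcompact : IsCompact (Icc u v ∩ f ⁻¹' F) := isCompact_Icc.of_isClosed_subset
    (hfc.preimage_isClosed_of_isClosed isClosed_Icc hF) inter_subset_left
  obtain ⟨t, ⟨ht, htF⟩, hmin⟩ := hcompact.exists_isLeast ⟨t₀, ht₀, ht₀F⟩
  have hut : u < t := lt_of_le_of_ne ht.1 fun h => ha (by rw [h]; exact htF)
  refine ⟨f t, htF, f '' Icc u t, image_mono (Icc_subset_Icc_right ht.2),
    image hfc hfi le_rfl hut ht.2,
    Subset.antisymm ?_ (singleton_subset_iff.2 ⟨⟨t, ⟨hut.le, le_rfl⟩, rfl⟩, htF⟩)⟩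
  rintro _ ⟨⟨s, hs, rfl⟩, hsF⟩
  rw [mem_singleton_iff, le_antisymm hs.2 (hmin ⟨⟨hs.1, hs.2.trans ht.2⟩, hsF⟩)]

lemma exists_concat_param (hA : IsArc A a b) (hB : IsArc B b c) :
    ∃ k : ℝ → X, ContinuousOn k (Icc 0 1) ∧ InjOn k (Icc 0 (1 / 2)) ∧ InjOn k (Icc (1 / 2) 1) ∧
      k 0 = a ∧ k (1 / 2) = b ∧ k 1 = c ∧ k '' Icc 0 (1 / 2) = A ∧ k '' Icc (1 / 2) 1 = B := by
  obtain ⟨f, hfc, hfi, rfl, hfb, rfl⟩ := hA.exists_param (show (0 : ℝ) < 1 / 2 by norm_num)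
  obtain ⟨g, hgc, hgi, hgb, rfl, rfl⟩ := hB.exists_param (show (1 / 2 : ℝ) < 1 by norm_num)
  let k (t : ℝ) : X := if t ≤ 1 / 2 then f t else g t
  have hkf : EqOn k f (Icc 0 (1 / 2)) := fun t ht => if_pos ht.2
  have hkg : EqOn k g (Icc (1 / 2) 1) := fun t ht => by
    rcases ht.1.eq_or_lt with rfl | hlt
    · simp only [k, le_refl, if_true, hfb, hgb]
    · exact if_neg hlt.not_ge
  refine ⟨k, ?_, hfi.congr hkf.symm, hgi.congr hkg.symm, hkf (by norm_num),
    (hkf (by norm_num)).trans hfb, hkg (by norm_num), hkf.image_eq, hkg.image_eq⟩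
  rw [← Icc_union_Icc_eq_Icc (show (0 : ℝ) ≤ 1 / 2 by norm_num) (by norm_num)]
  exact (hfc.congr hkf).union_of_isClosed (hgc.congr hkg) isClosed_Icc isClosed_Icc

lemma join (hA : IsArc A a b) (hB : IsArc B b c) (hAB : A ∩ B ⊆ {b}) : IsArc (A ∪ B) a c := by
  obtain ⟨k, hc, hi₁, hi₂, h0, rfl, h1, rfl, rfl⟩ := hA.exists_concat_param hB
  have hhalf : (0 : ℝ) ≤ 1 / 2 ∧ (1 / 2 : ℝ) ≤ 1 := by norm_num
  refine ⟨k, 0, 1, one_pos, hc, ?_, h0, h1, by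
    rw [← image_union, Icc_union_Icc_eq_Icc hhalf.1 hhalf.2]⟩
  rw [← Icc_union_Ioc_eq_Icc hhalf.1 hhalf.2, injOn_union
    (disjoint_left.2 fun t hs ht => ht.1.not_ge hs.2)]
  refine ⟨hi₁, hi₂.mono Ioc_subset_Icc_self, fun s hs t ht hst => ?_⟩
  have hkt : k t = k (1 / 2) :=
    hAB ⟨hst ▸ mem_image_of_mem k hs, mem_image_of_mem k (Ioc_subset_Icc_self ht)⟩
  exact ht.1.ne' (hi₂ (Ioc_subset_Icc_self ht) (left_mem_Icc.2 hhalf.2) hkt)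

end IsArc

section JordanCurve

variable {X : Type} [TopologicalSpace X] {A B J : Set X} {a b c : X}

lemma isJordanCurve_of_loop [T2Space X] {k : ℝ → X} (hc : ContinuousOn k (Icc 0 1))
    (hi : InjOn k (Ico 0 1)) (h01 : k 0 = k 1) : IsJordanCurve (k '' Icc 0 1) := by
  let F : AddCircle (1 : ℝ) → X := AddCircle.liftIco 1 0 k
  have hFk : ∀ t ∈ Ico (0 : ℝ) 1, F t = k t := fun t ht => AddCircle.liftIco_zero_coe_apply ht
  have hFi : Function.Injective F := by
    intro y z hyz
    obtain ⟨s, hs, rfl⟩ := AddCircle.eq_coe_Ico y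
    obtain ⟨t, ht, rfl⟩ := AddCircle.eq_coe_Ico z
    rw [hFk s hs, hFk t ht] at hyz
    rw [hi hs ht hyz]
  have hrange : range F = k '' Icc 0 1 := by
    apply Subset.antisymm
    · rintro _ ⟨z, rfl⟩
      obtain ⟨t, ht, rfl⟩ := AddCircle.eq_coe_Ico z
      exact ⟨t, Ico_subset_Icc_self ht, (hFk t ht).symm⟩
    · rintro _ ⟨t, ht, rfl⟩
      rcases ht.2.eq_or_lt with rfl | ht1
      · exact ⟨(0 : ℝ), by rw [hFk 0 ⟨le_rfl, one_pos⟩, h01]⟩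
      · exact ⟨t, hFk t ⟨ht.1, ht1⟩⟩
  have hemb := (AddCircle.liftIco_zero_continuous h01 hc).isClosedEmbedding hFi
  exact ⟨hemb.isEmbedding.toHomeomorph.trans (Homeomorph.setCongr hrange)⟩

lemma isJordanCurve_union [T2Space X] (hA : IsArc A a b) (hB : IsArc B a b)
    (hAB : A ∩ B ⊆ {a, b}) : IsJordanCurve (A ∪ B) := by
  obtain ⟨k, hc, hi₁, hi₂, rfl, rfl, h1, rfl, rfl⟩ := hA.exists_concat_param hB.symm
  have hhalf : (0 : ℝ) ≤ 1 / 2 ∧ (1 / 2 : ℝ) < 1 := by norm_num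
  rw [← image_union, Icc_union_Icc_eq_Icc hhalf.1 hhalf.2.le]
  refine isJordanCurve_of_loop hc ?_ h1.symm
  rw [← Icc_union_Ioo_eq_Ico hhalf.1 hhalf.2, injOn_union
    (disjoint_left.2 fun t hs ht => ht.1.not_ge hs.2)]
  refine ⟨hi₁, hi₂.mono Ioo_subset_Icc_self, fun s hs t ht hst => ?_⟩
  have ht' := Ioo_subset_Icc_self ht
  rcases hAB ⟨hst ▸ mem_image_of_mem k hs, mem_image_of_mem k ht'⟩ with hkt | hkt
  · exact ht.2.ne (hi₂ ht' (right_mem_Icc.2 hhalf.2.le) (hkt.trans h1.symm))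
  · exact ht.1.ne' (hi₂ ht' (left_mem_Icc.2 hhalf.2.le) hkt)

namespace IsJordanCurve

lemma isClosed [T2Space X] (hJ : IsJordanCurve J) : IsClosed J := by
  obtain ⟨e⟩ := hJ
  exact (isCompact_iff_compactSpace.2 e.compactSpace).isClosed

lemma exists_loop (hJ : IsJordanCurve J) (ha : a ∈ J) :
    ∃ k : ℝ → X, Continuous k ∧ InjOn k (Ico 0 1) ∧ InjOn k (Ioc 0 1) ∧ k 0 = a ∧ k 1 = a ∧
      k '' Icc 0 1 = J := by
  obtain ⟨e⟩ := hJ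
  obtain ⟨θ, hθ⟩ := e.surjective ⟨a, ha⟩
  let k (t : ℝ) : X := e ((t : AddCircle (1 : ℝ)) + θ)
  have hk {s t : ℝ} (hst : k s = k t) : (s : AddCircle (1 : ℝ)) = t :=
    add_right_cancel (e.injective (Subtype.ext hst))
  have hIco : InjOn k (Ico 0 1) := fun s hs t ht hst =>
    (AddCircle.coe_eq_coe_iff_of_mem_Ico (a := 0) (by simpa using hs) (by simpa using ht)).1
      (hk hst)
  have hIoc : InjOn k (Ioc 0 1) := fun s hs t ht hst =>
    (AddCircle.coe_eq_coe_iff_of_mem_Ioc (a := 0) (by simpa using hs) (by simpa using ht)).1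
      (hk hst)
  refine ⟨k, ?_, hIco, hIoc, by simp [k, hθ], ?_, Subset.antisymm ?_ fun x hx => ?_⟩
  · exact continuous_subtype_val.comp (e.continuous.comp
      ((AddCircle.continuous_mk' 1).add continuous_const))
  · simp only [k, AddCircle.coe_period (1 : ℝ), zero_add, hθ]
  · rintro _ ⟨t, -, rfl⟩
    exact (e _).2
  · obtain ⟨z, hz⟩ := e.surjective ⟨x, hx⟩
    obtain ⟨t, ht, htz⟩ := AddCircle.eq_coe_Ico (z - θ)
    exact ⟨t, Ico_subset_Icc_self ht, by simp only [k, htz, sub_add_cancel, hz]⟩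

lemma exists_ne (hJ : IsJordanCurve J) (ha : a ∈ J) : ∃ b ∈ J, b ≠ a := by
  obtain ⟨k, -, hki, -, rfl, -, rfl⟩ := hJ.exists_loop ha
  exact ⟨k (1 / 2), mem_image_of_mem k (by norm_num),
    hki.ne (by norm_num) (by norm_num) (by norm_num)⟩

lemma exists_arcs (hJ : IsJordanCurve J) (ha : a ∈ J) (hb : b ∈ J) (hab : a ≠ b) :
    ∃ A B, IsArc A a b ∧ IsArc B a b ∧ A ∪ B = J ∧ A ∩ B ⊆ {a, b} := by
  obtain ⟨k, hkc, hki, hki', rfl, hk1, rfl⟩ := hJ.exists_loop ha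
  obtain ⟨τ, hτ, rfl⟩ := hb
  have hτ0 : 0 < τ := lt_of_le_of_ne hτ.1 fun h => hab (by rw [← h])
  have hτ1 : τ < 1 := lt_of_le_of_ne hτ.2 fun h => hab (by rw [h, hk1])
  refine ⟨k '' Icc 0 τ, k '' Icc τ 1, ⟨k, 0, τ, hτ0, hkc.continuousOn,
    hki.mono (Icc_subset_Ico_right hτ1), rfl, rfl, rfl⟩,
    IsArc.symm ⟨k, τ, 1, hτ1, hkc.continuousOn, hki'.mono (Icc_subset_Ioc hτ0 le_rfl), rfl, hk1,
      rfl⟩, ?_, ?_⟩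
  · rw [← image_union, Icc_union_Icc_eq_Icc hτ0.le hτ1.le]
  · rintro _ ⟨⟨s, hs, rfl⟩, t, ht, hts⟩
    rcases ht.2.eq_or_lt with rfl | ht1
    · exact Or.inl (hts.symm.trans hk1)
    · obtain rfl := hki ⟨hτ0.le.trans ht.1, ht1⟩ ⟨hs.1, hs.2.trans_lt hτ1⟩ hts
      exact Or.inr (by rw [mem_singleton_iff, le_antisymm hs.2 ht.1])

lemma exists_arc_through (hJ : IsJordanCurve J) (ha : a ∈ J) (hb : b ∈ J) (hab : a ≠ b)
    (hc : c ∈ J) : ∃ A ⊆ J, IsArc A a b ∧ c ∈ A := by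
  obtain ⟨A, B, hA, hB, rfl, -⟩ := hJ.exists_arcs ha hb hab
  rcases hc with hc | hc
  · exact ⟨A, subset_union_left, hA, hc⟩
  · exact ⟨B, subset_union_right, hB, hc⟩

lemma exists_arc_avoiding (hJ : IsJordanCurve J) (ha : a ∈ J) (hb : b ∈ J) (hab : a ≠ b)
    (hca : c ≠ a) (hcb : c ≠ b) : ∃ A ⊆ J, IsArc A a b ∧ c ∉ A := by
  obtain ⟨A, B, hA, hB, rfl, hAB⟩ := hJ.exists_arcs ha hb hab
  by_cases hc : c ∈ A
  · exact ⟨B, subset_union_right, hB, fun hcB => (hAB ⟨hc, hcB⟩).elim hca hcb⟩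
  · exact ⟨A, subset_union_left, hA, hc⟩

end IsJordanCurve

end JordanCurve

lemma IsArc.exists_gap {X : Type*} [TopologicalSpace X] {E K : Set X} {a b y : X}
    (hE : IsArc E a b) (hK : IsClosed K) (ha : a ∈ K) (hb : b ∈ K) (hy : y ∈ E) (hyK : y ∉ K) :
    ∃ G ⊆ E, ∃ c ∈ K, ∃ d ∈ K, IsArc G c d ∧ y ∈ G ∧ G ∩ K ⊆ {c, d} := by
  obtain ⟨E₁, E₂, hE₁, hE₂, rfl, hE₁₂⟩ := hE.split hy (fun h => hyK (h ▸ ha))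
    (fun h => hyK (h ▸ hb))
  obtain ⟨c, hc, G₁, hG₁E, hG₁, hG₁K⟩ :=
    hE₁.symm.exists_first_hit hK ⟨a, hE₁.left_mem, ha⟩ hyK
  obtain ⟨d, hd, G₂, hG₂E, hG₂, hG₂K⟩ :=
    hE₂.exists_first_hit hK ⟨b, hE₂.right_mem, hb⟩ hyK
  refine ⟨G₁ ∪ G₂, union_subset_union hG₁E hG₂E, c, hc, d, hd,
    hG₁.symm.join hG₂ ((inter_subset_inter hG₁E hG₂E).trans hE₁₂.subset), Or.inl hG₁.left_mem, ?_⟩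
  rw [union_inter_distrib_right, hG₁K, hG₂K]
  exact singleton_union.subset

section CyclicallyConnected

variable {X : Type} [TopologicalSpace X] {C D E K S T : Set X} {a b q x : X}

lemma IsJordanCurve.cyclicallyConnected {J : Set X} (hJ : IsJordanCurve J) :
    CyclicallyConnected J := fun _ hx _ hy => ⟨J, Subset.rfl, hJ, hx, hy⟩

namespace CyclicallyConnected

lemma union_of_forall (hC : CyclicallyConnected C)
    (h : ∀ y ∈ D, ∀ x ∈ C ∪ D, ∃ J ⊆ C ∪ D, IsJordanCurve J ∧ y ∈ J ∧ x ∈ J) :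
    CyclicallyConnected (C ∪ D) := by
  intro x hx y hy
  rcases hx with hxC | hxD
  · rcases hy with hyC | hyD
    · obtain ⟨J, hJC, hJ⟩ := hC x hxC y hyC
      exact ⟨J, hJC.trans subset_union_left, hJ⟩
    · obtain ⟨J, hJ, hJc, hyJ, hxJ⟩ := h y hyD x (Or.inl hxC)
      exact ⟨J, hJ, hJc, hxJ, hyJ⟩
  · exact h x hxD y hy

lemma sUnion_of_isChain {c : Set (Set X)} (hc : ∀ C ∈ c, CyclicallyConnected C)
    (hchain : IsChain (· ⊆ ·) c) : CyclicallyConnected (⋃₀ c) := by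
  rintro x ⟨C, hC, hxC⟩ y ⟨D, hD, hyD⟩
  obtain ⟨B, hB, hCB, hDB⟩ := hchain.directedOn C hC D hD
  obtain ⟨J, hJ, hxyJ⟩ := hc B hB x (hCB hxC) y (hDB hyD)
  exact ⟨J, hJ.trans (subset_sUnion_of_mem hB), hxyJ⟩

lemma exists_maximal (hC : CyclicallyConnected C) (hCS : C ⊆ S) :
    ∃ T, C ⊆ T ∧ T ⊆ S ∧ CyclicallyConnected T ∧
      ∀ D ⊆ S, CyclicallyConnected D → T ⊆ D → D = T := by
  obtain ⟨T, hCT, ⟨hTS, hT⟩, hmax⟩ :=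
    zorn_subset_nonempty {C | C ⊆ S ∧ CyclicallyConnected C}
      (fun c hcS hc _ => ⟨⋃₀ c, ⟨sUnion_subset fun D hD => (hcS hD).1,
        sUnion_of_isChain (fun D hD => (hcS hD).2) hc⟩, fun D hD => subset_sUnion_of_mem hD⟩)
      C ⟨hCS, hC⟩
  exact ⟨T, hCT, hTS, hT, fun D hDS hD hTD => (hmax ⟨hDS, hD⟩ hTD).antisymm hTD⟩

lemma not_subsingleton (hC : CyclicallyConnected C) (hne : C.Nonempty) : ¬ C.Subsingleton := by
  obtain ⟨x, hx⟩ := hne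
  obtain ⟨J, hJC, hJ, hxJ, -⟩ := hC x hx x hx
  obtain ⟨y, hyJ, hyx⟩ := hJ.exists_ne hxJ
  exact fun hsub => hyx (hsub (hJC hyJ) hx)

lemma exists_maximalCyclic (hC : CyclicallyConnected C) (hne : C.Nonempty) :
    ∃ T, C ⊆ T ∧ MaximalCyclic T := by
  obtain ⟨T, hCT, -, hT, hmax⟩ := hC.exists_maximal (subset_univ C)
  exact ⟨T, hCT, hT.not_subsingleton (hne.mono hCT), hT, fun D => hmax D (subset_univ D)⟩

section T2Space

variable [T2Space X]

-- If the curve through `b` and `q` first meets the one through `a` and `q` only at `a` in both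
-- directions, then `a` lies on both arcs from `b` to `q`, so `a` is `b` or `q`.
lemma exists_arc_through (hC : CyclicallyConnected C) (ha : a ∈ C) (hb : b ∈ C) (hab : a ≠ b)
    (hq : q ∈ C) : ∃ A ⊆ C, IsArc A a b ∧ q ∈ A := by
  obtain ⟨J, hJC, hJ, haJ, hqJ⟩ := hC a ha q hq
  by_cases hbJ : b ∈ J
  · obtain ⟨A, hAJ, hA, hqA⟩ := hJ.exists_arc_through haJ hbJ hab hqJ
    exact ⟨A, hAJ.trans hJC, hA, hqA⟩
  obtain rfl | haq := eq_or_ne a q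
  · obtain ⟨J', hJC', hJ', haJ', hbJ'⟩ := hC a ha b hb
    obtain ⟨A, hAJ, hA, haA⟩ := hJ'.exists_arc_through haJ' hbJ' hab haJ'
    exact ⟨A, hAJ.trans hJC', hA, haA⟩
  obtain ⟨L, hLC, hL, hbL, hqL⟩ := hC b hb q hq
  obtain ⟨L₁, L₂, hL₁, hL₂, rfl, hLL⟩ := hL.exists_arcs hbL hqL fun h => hbJ (h ▸ hqJ)
  have hthrough {c : X} {B : Set X} (hc : c ∈ J) (hBL : B ⊆ L₁ ∪ L₂) (hB : IsArc B b c)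
      (hBJ : B ∩ J = {c}) (hca : c ≠ a) : ∃ A ⊆ C, IsArc A a b ∧ q ∈ A := by
    obtain ⟨A, hAJ, hA, hqA⟩ := hJ.exists_arc_through haJ hc hca.symm hqJ
    exact ⟨A ∪ B, union_subset (hAJ.trans hJC) (hBL.trans hLC), hA.join hB.symm fun x hx =>
      hBJ.subset ⟨hx.2, hAJ hx.1⟩, Or.inl hqA⟩
  obtain ⟨c₁, hc₁, B₁, hB₁L, hB₁, hB₁J⟩ :=
    hL₁.exists_first_hit hJ.isClosed ⟨q, hL₁.right_mem, hqJ⟩ hbJ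
  obtain ⟨c₂, hc₂, B₂, hB₂L, hB₂, hB₂J⟩ :=
    hL₂.exists_first_hit hJ.isClosed ⟨q, hL₂.right_mem, hqJ⟩ hbJ
  by_cases hca₁ : c₁ = a
  · by_cases hca₂ : c₂ = a
    · have haL : a ∈ L₁ ∩ L₂ := ⟨hB₁L (hca₁ ▸ hB₁.right_mem), hB₂L (hca₂ ▸ hB₂.right_mem)⟩
      exact ((hLL haL).elim hab haq).elim
    · exact hthrough hc₂ (hB₂L.trans subset_union_right) hB₂ hB₂J hca₂
  · exact hthrough hc₁ (hB₁L.trans subset_union_left) hB₁ hB₁J hca₁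

lemma exists_arc (hC : CyclicallyConnected C) (ha : a ∈ C) (hb : b ∈ C) (hab : a ≠ b) :
    ∃ A ⊆ C, IsArc A a b := by
  obtain ⟨A, hAC, hA, -⟩ := hC.exists_arc_through ha hb hab ha
  exact ⟨A, hAC, hA⟩

lemma union_ear (hK : CyclicallyConnected K) (hE : IsArc E a b) (ha : a ∈ K) (hb : b ∈ K)
    (hEK : E ∩ K ⊆ {a, b}) : CyclicallyConnected (K ∪ E) := by
  refine hK.union_of_forall fun y hy x hx => ?_
  obtain ⟨A, hAK, hA, hxA⟩ : ∃ A ⊆ K, IsArc A a b ∧ x ∈ A ∪ E := by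
    rcases hx with hxK | hxE
    · obtain ⟨A, hAK, hA, hxA⟩ := hK.exists_arc_through ha hb hE.ne hxK
      exact ⟨A, hAK, hA, Or.inl hxA⟩
    · obtain ⟨A, hAK, hA⟩ := hK.exists_arc ha hb hE.ne
      exact ⟨A, hAK, hA, Or.inr hxE⟩
  exact ⟨A ∪ E, union_subset_union_left E hAK,
    isJordanCurve_union hA hE fun z hz => hEK ⟨hz.2, hAK hz.1⟩, Or.inr hy, hxA⟩

lemma exists_gap_union (hK : CyclicallyConnected K) (hKc : IsClosed K) (hE : IsArc E a b)
    (ha : a ∈ K) (hb : b ∈ K) (hx : x ∈ K ∪ E) :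
    ∃ K', IsClosed K' ∧ CyclicallyConnected K' ∧ K ⊆ K' ∧ K' ⊆ K ∪ E ∧ x ∈ K' := by
  by_cases hxK : x ∈ K
  · exact ⟨K, hKc, hK, Subset.rfl, subset_union_left, hxK⟩
  obtain ⟨G, hGE, c, hc, d, hd, hG, hxG, hGK⟩ :=
    hE.exists_gap hKc ha hb (hx.resolve_left hxK) hxK
  exact ⟨K ∪ G, hKc.union hG.isClosed, hK.union_ear hG hc hd hGK, subset_union_left,
    union_subset_union_right _ hGE, Or.inr hxG⟩

lemma union_arc_of_isClosed (hK : CyclicallyConnected K) (hKc : IsClosed K) (hE : IsArc E a b)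
    (ha : a ∈ K) (hb : b ∈ K) : CyclicallyConnected (K ∪ E) := by
  intro x hx y hy
  obtain ⟨K', hKc', hK', hKK', hKE', hxK'⟩ := hK.exists_gap_union hKc hE ha hb hx
  obtain ⟨K'', -, hK'', hKK'', hKE'', hyK''⟩ :=
    hK'.exists_gap_union hKc' hE (hKK' ha) (hKK' hb) (union_subset_union_left E hKK' hy)
  obtain ⟨J, hJ, hxyJ⟩ := hK'' x (hKK'' hxK') y hyK''
  exact ⟨J, hJ.trans (hKE''.trans (union_subset hKE' subset_union_right)), hxyJ⟩

lemma exists_isClosed_subset (hC : CyclicallyConnected C) (ha : a ∈ C) (hb : b ∈ C) (hab : a ≠ b)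
    (hq : q ∈ C) : ∃ K ⊆ C, IsClosed K ∧ CyclicallyConnected K ∧ a ∈ K ∧ b ∈ K ∧ q ∈ K := by
  obtain ⟨J, hJC, hJ, haJ, hbJ⟩ := hC a ha b hb
  obtain ⟨L, hLC, hL, hqL⟩ := hC.exists_arc_through ha hb hab hq
  exact ⟨J ∪ L, union_subset hJC hLC, hJ.isClosed.union hL.isClosed,
    hJ.cyclicallyConnected.union_arc_of_isClosed hJ.isClosed hL haJ hbJ, Or.inl haJ, Or.inl hbJ,
    Or.inr hqL⟩

lemma union_arc (hC : CyclicallyConnected C) (hE : IsArc E a b) (ha : a ∈ C) (hb : b ∈ C) :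
    CyclicallyConnected (C ∪ E) := by
  refine hC.union_of_forall fun y hy x hx => ?_
  obtain ⟨K, hKC, hKc, hK, haK, hbK, hxK⟩ :
      ∃ K ⊆ C, IsClosed K ∧ CyclicallyConnected K ∧ a ∈ K ∧ b ∈ K ∧ x ∈ K ∪ E := by
    rcases hx with hxC | hxE
    · obtain ⟨K, hKC, hKc, hK, haK, hbK, hxK⟩ := hC.exists_isClosed_subset ha hb hE.ne hxC
      exact ⟨K, hKC, hKc, hK, haK, hbK, Or.inl hxK⟩
    · obtain ⟨K, hKC, hKc, hK, haK, hbK, -⟩ := hC.exists_isClosed_subset ha hb hE.ne ha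
      exact ⟨K, hKC, hKc, hK, haK, hbK, Or.inr hxE⟩
  obtain ⟨J, hJ, hyxJ⟩ := hK.union_arc_of_isClosed hKc hE haK hbK y (Or.inr hy) x hxK
  exact ⟨J, hJ.trans (union_subset_union_left _ hKC), hyxJ⟩

lemma union (hC : CyclicallyConnected C) (hD : CyclicallyConnected D) (haC : a ∈ C) (hbC : b ∈ C)
    (haD : a ∈ D) (hbD : b ∈ D) (hab : a ≠ b) : CyclicallyConnected (C ∪ D) := by
  refine hC.union_of_forall fun y hy x hx => ?_
  rcases hx with hxC | hxD
  · obtain ⟨L, hLD, hL, hyL⟩ := hD.exists_arc_through haD hbD hab hy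
    obtain ⟨J, hJ, hyxJ⟩ := hC.union_arc hL haC hbC y (Or.inr hyL) x (Or.inl hxC)
    exact ⟨J, hJ.trans (union_subset_union_right _ hLD), hyxJ⟩
  · obtain ⟨J, hJ, hyxJ⟩ := hD y hy x hxD
    exact ⟨J, hJ.trans subset_union_right, hyxJ⟩

end T2Space

end CyclicallyConnected

namespace MaximalCyclic

lemma arc_subset [T2Space X] (hT : MaximalCyclic T) {A : Set X} (hA : IsArc A a b) (ha : a ∈ T)
    (hb : b ∈ T) : A ⊆ T := by
  rw [← hT.2.2 _ (hT.2.1.union_arc hA ha hb) subset_union_left]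
  exact subset_union_right

lemma subset_of_mem [T2Space X] (hT : MaximalCyclic T) (hC : CyclicallyConnected C) (ha : a ∈ T)
    (hb : b ∈ T) (haC : a ∈ C) (hbC : b ∈ C) (hab : a ≠ b) : C ⊆ T := by
  rw [← hT.2.2 _ (hT.2.1.union hC ha hb haC hbC hab) subset_union_left]
  exact subset_union_right

lemma eq_of_mem [T2Space X] {T' : Set X} (hT : MaximalCyclic T) (hT' : MaximalCyclic T')
    (ha : a ∈ T) (hb : b ∈ T) (ha' : a ∈ T') (hb' : b ∈ T') (hab : a ≠ b) : T = T' :=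
  (hT'.subset_of_mem hT.2.1 ha' hb' ha hb hab).antisymm
    (hT.subset_of_mem hT'.2.1 ha hb ha' hb' hab)

lemma joinedIn_inter {X : Type} [MetricSpace X] {T M : Set X} {a b : X} (hT : MaximalCyclic T)
    (h : JoinedIn M a b) (ha : a ∈ T) (hb : b ∈ T) : JoinedIn (T ∩ M) a b := by
  obtain rfl | hab := eq_or_ne a b
  · exact JoinedIn.refl ⟨ha, h.source_mem⟩
  · obtain ⟨A, hAM, hA⟩ := exists_isArc_of_joinedIn h hab
    exact hA.joinedIn.mono (subset_inter (hT.arc_subset hA ha hb) hAM)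

end MaximalCyclic

end CyclicallyConnected

section FirstHit

variable {X : Type*} [TopologicalSpace X] {A G P Q : Set X} {a b : X}

lemma IsArc.subset_closure_sdiff (h : IsArc A a b) : A ⊆ closure (A \ {b}) := by
  obtain ⟨f, u, v, huv, hc, hi, rfl, rfl, rfl⟩ := h
  have hv : v ∈ Icc u v := right_mem_Icc.2 huv.le
  have hsub : f '' Ico u v ⊆ f '' Icc u v \ {f v} := by
    rintro _ ⟨t, ht, rfl⟩
    exact ⟨mem_image_of_mem f (Ico_subset_Icc_self ht),
      hi.ne (Ico_subset_Icc_self ht) hv ht.2.ne⟩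
  calc f '' Icc u v = f '' closure (Ico u v) := by rw [closure_Ico huv.ne]
    _ ⊆ closure (f '' Ico u v) := ContinuousOn.image_closure (by rwa [closure_Ico huv.ne])
    _ ⊆ closure (f '' Icc u v \ {f v}) := closure_mono hsub

lemma IsArc.exists_first_exit (h : IsArc A a b) {g : X → ℝ} (hg : Continuous g) {r : ℝ}
    (ha : g a < r) (hr : ∃ z ∈ A, r ≤ g z) :
    ∃ c, ∃ A₁ ⊆ A, IsArc A₁ a c ∧ g c = r ∧ ∀ x ∈ A₁, g x ≤ r := by
  obtain ⟨c, hc, A₁, hA₁A, hA₁, hA₁c⟩ :=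
    h.exists_first_hit (F := g ⁻¹' Ici r) (isClosed_Ici.preimage hg) hr ha.not_ge
  have hlt : A₁ \ {c} ⊆ {x | g x < r} := fun x hx => show g x < r from
    lt_of_not_ge fun hxr : r ≤ g x => hx.2 (hA₁c.subset ⟨hx.1, hxr⟩)
  have hle : A₁ ⊆ {x | g x ≤ r} := hA₁.subset_closure_sdiff.trans
    ((closure_mono hlt).trans (closure_lt_subset_le hg continuous_const))
  exact ⟨c, A₁, hA₁A, hA₁, (hle hA₁.right_mem).antisymm hc, fun x hx => hle hx⟩

lemma IsArc.exists_crossing (hG : IsArc G a b) (hP : IsClosed P) (hQ : IsClosed Q) (ha : a ∈ P)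
    (hb : b ∈ Q) (hPQ : ∀ z ∈ G, z ∈ P → z ∉ Q) :
    ∃ c ∈ P, ∃ d ∈ Q, ∃ G' ⊆ G, IsArc G' c d ∧ G' ∩ P = {c} ∧ G' ∩ Q = {d} := by
  obtain ⟨d, hd, G₁, hG₁G, hG₁, hG₁Q⟩ :=
    hG.exists_first_hit hQ ⟨b, hG.right_mem, hb⟩ (hPQ a hG.left_mem ha)
  obtain ⟨c, hc, G₂, hG₂G₁, hG₂, hG₂P⟩ :=
    hG₁.symm.exists_first_hit hP ⟨a, hG₁.left_mem, ha⟩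
      fun hdP => hPQ d (hG₁G hG₁.right_mem) hdP hd
  refine ⟨c, hc, d, hd, G₂, hG₂G₁.trans hG₁G, hG₂.symm, hG₂P, Subset.antisymm ?_ ?_⟩
  · exact hG₁Q ▸ inter_subset_inter_left Q hG₂G₁
  · exact singleton_subset_iff.2 ⟨hG₂.left_mem, hd⟩

end FirstHit

section EndArcs

/-- The restriction of `α` to `[s, 1]` parametrizes an arc which ends at `p` and otherwise lies
in `T`. -/
structure EndArc {X : Type*} [TopologicalSpace X] (T : Set X) (p : X) (α : ℝ → X) (s : ℝ) :
    Prop where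
  lt_one : s < 1
  continuousOn : ContinuousOn α (Icc s 1)
  injOn : InjOn α (Icc s 1)
  apply_one : α 1 = p
  mem : ∀ t ∈ Ico s 1, α t ∈ T

/-- The point `α c` of an arc in `S` is bypassed if points of the arc on its two sides can be
joined in `S` without passing through `α c`. -/
def IsBypassed {X : Type*} [TopologicalSpace X] (S : Set X) (α : ℝ → X) (s c : ℝ) : Prop :=
  ∃ u ∈ Ico s c, ∃ v ∈ Ioo c 1, JoinedIn (S \ {α c}) (α u) (α v)

lemma inter_ball_subset_sdiff {X : Type*} [PseudoMetricSpace X] {T : Set X} {p w z : X} {ε : ℝ}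
    (hz : z ∈ sphere p (ε / 2)) (hw : w ∈ ball p (ε / 4)) :
    T ∩ ball z (ε / 4) ⊆ (T ∩ ball p ε) \ {w} := by
  rintro x ⟨hxT, hxz⟩
  rw [mem_sphere] at hz
  rw [mem_ball] at hxz hw
  refine ⟨⟨hxT, mem_ball.2 ?_⟩, ?_⟩
  · linarith [dist_triangle x z p, dist_nonneg (x := w) (y := p)]
  · rintro rfl
    linarith [dist_triangle_left z p x]

namespace EndArc

section TopologicalSpace

variable {X : Type*} [TopologicalSpace X] {S T U : Set X} {p : X} {α : ℝ → X} {s : ℝ}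

lemma tendsto (h : EndArc T p α s) : Tendsto α (𝓝[<] 1) (𝓝 p) := by
  have h1 := h.continuousOn 1 (right_mem_Icc.2 h.lt_one.le)
  rw [ContinuousWithinAt, h.apply_one] at h1
  refine h1.mono_left ?_
  rw [← nhdsWithin_Ioo_eq_nhdsLT h.lt_one]
  exact nhdsWithin_mono 1 Ioo_subset_Icc_self

lemma exists_inter (h : EndArc T p α s) (hU : U ∈ 𝓝 p) :
    ∃ s' ∈ Ico s 1, EndArc (T ∩ U) p α s' := by
  obtain ⟨r, hr, hrU⟩ :=
    (mem_nhdsLT_iff_exists_mem_Ico_Ioo_subset h.lt_one).1 (h.tendsto hU)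
  obtain ⟨s', hrs', hs'⟩ := exists_between hr.2
  have hss' : s ≤ s' := hr.1.trans hrs'.le
  exact ⟨s', ⟨hss', hs'⟩, hs', h.continuousOn.mono (Icc_subset_Icc_left hss'),
    h.injOn.mono (Icc_subset_Icc_left hss'), h.apply_one, fun t ht =>
      ⟨h.mem t ⟨hss'.trans ht.1, ht.2⟩, hrU ⟨hrs'.trans_le ht.1, ht.2⟩⟩⟩

lemma exists_arc (h : EndArc T p α s) (hS : ∀ᶠ t in 𝓝[<] 1, α t ∈ S) :
    ∃ a b, ∃ F ⊆ S, IsArc F a b := by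
  obtain ⟨r, hr, hrS⟩ := (mem_nhdsLT_iff_exists_mem_Ico_Ioo_subset h.lt_one).1 hS
  obtain ⟨u, hru, hu⟩ := exists_between hr.2
  obtain ⟨v, huv, hv⟩ := exists_between hu
  exact ⟨α u, α v, α '' Icc u v, image_subset_iff.2 ((Icc_subset_Ioo hru hv).trans hrS),
    IsArc.image h.continuousOn h.injOn (hr.1.trans hru.le) huv hv.le⟩

end TopologicalSpace

section Bypass

variable {X : Type} [MetricSpace X] {S T : Set X} {p : X} {α : ℝ → X} {c s ε : ℝ}

lemma exists_jordanCurve (hα : EndArc S p α s) (hp : p ∉ S) (hc : IsBypassed S α s c) :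
    ∃ J ⊆ S, IsJordanCurve J ∧ ∀ᶠ t in 𝓝 c, α t ∈ J := by
  obtain ⟨u, hu, v, hv, hj⟩ := hc
  have hsc : s < c := hu.1.trans_lt hu.2
  have hc1 : c < 1 := hv.1.trans hv.2
  have hleft : Icc s c ⊆ Icc s 1 := Icc_subset_Icc_right hc1.le
  have hright : Icc c 1 ⊆ Icc s 1 := Icc_subset_Icc_left hsc.le
  have huI := hleft ⟨hu.1, hu.2.le⟩
  have hvI := hright ⟨hv.1.le, hv.2.le⟩
  obtain ⟨G, hGS, hG⟩ := exists_isArc_of_joinedIn hj (hα.injOn.ne huI hvI (hu.2.trans hv.1).ne)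
  have hinter : α '' Icc s c ∩ α '' Icc c 1 = {α c} := by
    rw [← hα.injOn.image_inter hleft hright, Icc_inter_Icc_eq_singleton hsc.le hc1.le,
      image_singleton]
  obtain ⟨_, ⟨u', hu', rfl⟩, _, ⟨v', hv', rfl⟩, G', hG'G, hG', hG'u, hG'v⟩ := hG.exists_crossing
    (IsArc.image hα.continuousOn hα.injOn le_rfl hsc hc1.le).isClosed
    (IsArc.image hα.continuousOn hα.injOn hsc.le hc1 le_rfl).isClosed
    (mem_image_of_mem α ⟨hu.1, hu.2.le⟩) (mem_image_of_mem α ⟨hv.1.le, hv.2.le⟩)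
    fun z hz hzP hzQ => (hGS hz).2 (hinter.subset ⟨hzP, hzQ⟩)
  have hG'S := hG'G.trans hGS
  have hu'c : u' < c := hu'.2.lt_of_ne fun h => (hG'S hG'.left_mem).2 (by rw [h]; rfl)
  have hcv' : c < v' := hv'.1.lt_of_ne fun h => (hG'S hG'.right_mem).2 (by rw [h]; rfl)
  have hv'1 : v' < 1 := hv'.2.lt_of_ne fun h =>
    hp (by rw [← hα.apply_one, ← h]; exact (hG'S hG'.right_mem).1)
  have hE : IsArc (α '' Icc u' v') (α u') (α v') :=
    IsArc.image hα.continuousOn hα.injOn hu'.1 (hu'c.trans hcv') hv'.2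
  refine ⟨α '' Icc u' v' ∪ G', union_subset ?_ (hG'S.trans sdiff_subset),
    isJordanCurve_union hE hG' ?_, ?_⟩
  · exact image_subset_iff.2 fun t ht => hα.mem t ⟨hu'.1.trans ht.1, ht.2.trans_lt hv'1⟩
  · rintro _ ⟨⟨t, ht, rfl⟩, htG⟩
    rcases le_total t c with h | h
    · exact Or.inl (hG'u.subset ⟨htG, mem_image_of_mem α ⟨hu'.1.trans ht.1, h⟩⟩)
    · exact Or.inr (hG'v.subset ⟨htG, mem_image_of_mem α ⟨h, ht.2.trans hv'.2⟩⟩)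
  · filter_upwards [Icc_mem_nhds hu'c hcv'] with t ht
    exact Or.inl (mem_image_of_mem α ht)

lemma exists_escape (hα : EndArc (T ∩ ball p ε) p α s) (hT : MaximalCyclic T) (hε : 0 < ε)
    (hc : c ∈ Ioo s 1) (hb : ¬ IsBypassed (T ∩ ball p ε) α s c) :
    ∃ v ∈ Ioo c 1, ∃ y ∈ sphere p (ε / 2), ∃ G ⊆ (T ∩ ball p ε) \ {α c}, IsArc G (α v) y := by
  obtain ⟨v, hvb, hv⟩ :=
    ((hα.tendsto.eventually (ball_mem_nhds p (half_pos hε))).and (Ioo_mem_nhdsLT hc.2)).exists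
  have hsI : s ∈ Icc s 1 := left_mem_Icc.2 hα.lt_one.le
  have hcI : c ∈ Icc s 1 := Ioo_subset_Icc_self hc
  have hvI : v ∈ Icc s 1 := ⟨hc.1.le.trans hv.1.le, hv.2.le⟩
  obtain ⟨J, hJT, hJ, hvJ, hsJ⟩ := hT.2.1 _ (hα.mem v ⟨hvI.1, hv.2⟩).1 _
    (hα.mem s ⟨le_rfl, hα.lt_one⟩).1
  obtain ⟨G, hGJ, hG, hcG⟩ := hJ.exists_arc_avoiding hvJ hsJ
    (hα.injOn.ne hvI hsI (hc.1.trans hv.1).ne') (hα.injOn.ne hcI hvI hv.1.ne)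
    (hα.injOn.ne hcI hsI hc.1.ne')
  have hGc {G' : Set X} (hG' : G' ⊆ G) (hG'b : ∀ x ∈ G', dist x p ≤ ε / 2) :
      G' ⊆ (T ∩ ball p ε) \ {α c} := fun x hx =>
    ⟨⟨hJT (hGJ (hG' hx)), (hG'b x hx).trans_lt (half_lt_self hε)⟩,
      fun hxc => hcG (hxc ▸ hG' hx)⟩
  obtain ⟨y, G₁, hG₁G, hG₁, hy, hG₁b⟩ :=
    hG.exists_first_exit (continuous_id.dist continuous_const) hvb (by
      by_contra! hlt
      exact hb ⟨s, ⟨le_rfl, hc.1⟩, v, hv,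
        hG.symm.joinedIn.mono (hGc Subset.rfl fun x hx => (hlt x hx).le)⟩)
  exact ⟨v, hv, y, hy, G₁, hGc hG₁G hG₁b, hG₁⟩

-- The escape arcs of the points that are not bypassed end on a compact sphere; near a cluster
-- point of their far ends two of them join up to a bypass.
lemma eventually_isBypassed [ProperSpace X] [LocallyPathConnectedSpace X]
    (hα : EndArc (T ∩ ball p ε) p α s) (hT : MaximalCyclic T) (hpT : p ∉ T) (hε : 0 < ε) :
    ∀ᶠ c in 𝓝[<] 1, IsBypassed (T ∩ ball p ε) α s c := by
  by_contra hcon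
  have : Nonempty X := ⟨p⟩
  choose! v hv y hy G hGs hG using fun (c : ℝ) (hc : c ∈ Ioo s 1)
    (hb : ¬ IsBypassed (T ∩ ball p ε) α s c) => hα.exists_escape hT hε hc hb
  let l : Filter ℝ := 𝓝[<] 1 ⊓ 𝓟 {c | ¬ IsBypassed (T ∩ ball p ε) α s c}
  have hl1 : l ≤ 𝓝[<] 1 := inf_le_left
  have : l.NeBot := frequently_iff_neBot.1 (not_eventually.1 hcon)
  have hb : ∀ᶠ c in l, ¬ IsBypassed (T ∩ ball p ε) α s c := mem_inf_of_right (mem_principal_self _)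
  have hs : ∀ᶠ c in l, c ∈ Ioo s 1 := hl1 (Ioo_mem_nhdsLT hα.lt_one)
  have hnear : ∀ᶠ c in l, α c ∈ ball p (ε / 4) :=
    hl1 (hα.tendsto.eventually (ball_mem_nhds p (by positivity)))
  obtain ⟨z, hz, hcluster⟩ := (isCompact_sphere p (ε / 2)).exists_mapClusterPt (f := l) (u := y)
    (tendsto_principal.2 (by filter_upwards [hs, hb] with c hc hbc using hy c hc hbc))
  have hM : ∀ᶠ x in 𝓝 z, x ∈ pathComponentIn (ball z (ε / 4)) z :=
    pathComponentIn_mem_nhds (ball_mem_nhds z (by positivity))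
  obtain ⟨c, hcM, hc, hbc⟩ := ((hcluster.frequently hM).and_eventually (hs.and hb)).exists
  have hGc : ∀ᶠ d in l, α d ∉ G c := hl1 (hα.tendsto.eventually
    ((hG c hc hbc).isClosed.isOpen_compl.mem_nhds fun hp => hpT (hGs c hc hbc hp).1.1))
  obtain ⟨d, hdM, hd, hbd, hdp, hdG, hdv⟩ := ((hcluster.frequently hM).and_eventually (hs.and
    (hb.and (hnear.and (hGc.and (hl1 (Ioo_mem_nhdsLT (hv c hc hbc).2))))))).exists
  have hy_mem {c : ℝ} (hc : c ∈ Ioo s 1) (hbc : ¬ IsBypassed (T ∩ ball p ε) α s c) : y c ∈ T :=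
    (hGs c hc hbc (hG c hc hbc).right_mem).1.1
  have hcd : JoinedIn ((T ∩ ball p ε) \ {α d}) (y c) (y d) :=
    (hT.joinedIn_inter (hcM.symm.trans hdM) (hy_mem hc hbc) (hy_mem hd hbd)).mono
      (inter_ball_subset_sdiff hz hdp)
  have hGcd : G c ⊆ (T ∩ ball p ε) \ {α d} := fun x hx =>
    ⟨(hGs c hc hbc hx).1, fun h => hdG (h ▸ hx)⟩
  exact hbd ⟨v c, ⟨hc.1.le.trans (hv c hc hbc).1.le, hdv.1⟩, v d, hv d hd hbd,
    (((hG c hc hbc).joinedIn.mono hGcd).trans hcd).trans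
      ((hG d hd hbd).joinedIn.mono (hGs d hd hbd)).symm⟩

end Bypass

end EndArc

lemma exists_cyclicallyConnected_image_subset {Y : Type*} {X : Type} [TopologicalSpace Y]
    [MetricSpace X] [∀ y : Y, (𝓝[≠] y).NeBot] {α : Y → X} {I : Set Y} {S : Set X}
    (hI : IsPreconnected I) (hIo : IsOpen I) (hne : I.Nonempty) (hα : InjOn α I)
    (h : ∀ c ∈ I, ∃ K ⊆ S, CyclicallyConnected K ∧ ∀ᶠ t in 𝓝 c, α t ∈ K) :
    ∃ C ⊆ S, CyclicallyConnected C ∧ α '' I ⊆ C := by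
  choose! K hKS hK hKα using h
  obtain ⟨c₀, hc₀⟩ := hne
  obtain ⟨C, hKC, hCS, hC, hmax⟩ := (hK c₀ hc₀).exists_maximal (hKS c₀ hc₀)
  have hstep {c d s t : Y} (hd : d ∈ I) (hst : α s ≠ α t) (hs : α s ∈ K c ∩ K d)
      (ht : α t ∈ K c ∩ K d) (hcC : K c ⊆ C) : K d ⊆ C := by
    rw [← hmax _ (union_subset hCS (hKS d hd)) (hC.union (hK d hd) (hcC hs.1) (hcC ht.1) hs.2
      ht.2 hst) subset_union_left]
    exact subset_union_right
  have hKC' : ∀ d ∈ I, K d ⊆ C := fun d hd => by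
    refine hI.induction₂ (fun c d => K c ⊆ C ↔ K d ⊆ C) (fun c hc => ?_) ?_ ?_ hc₀ hd |>.1 hKC
    · filter_upwards [mem_nhdsWithin_of_mem_nhds (eventually_eventually_nhds.2 (hKα c hc)),
        self_mem_nhdsWithin] with d hdc hd
      have hnear : ∀ᶠ t in 𝓝 d, t ∈ I ∧ α t ∈ K c ∩ K d :=
        (hIo.eventually_mem hd).and (hdc.and (hKα d hd))
      obtain ⟨t, ⟨htI, ht⟩, htd⟩ :=
        ((hnear.filter_mono nhdsWithin_le_nhds).and
          (self_mem_nhdsWithin : ∀ᶠ t in 𝓝[≠] d, t ≠ d)).exists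
      have hdt : α d ≠ α t := hα.ne hd htI (Ne.symm htd)
      have hd' := hnear.self_of_nhds.2
      exact ⟨hstep hd hdt hd' ht, hstep hc hdt hd'.symm ht.symm⟩
    · exact fun _ _ _ _ _ _ => Iff.trans
    · exact fun _ _ _ _ => Iff.symm
  exact ⟨C, hCS, hC, image_subset_iff.2 fun d hd => hKC' d hd (hKα d hd).self_of_nhds⟩

lemma EndArc.exists_cyclic_tail {X : Type} [MetricSpace X] [ProperSpace X]
    [LocallyPathConnectedSpace X] {T : Set X} {p : X} {α : ℝ → X} {s ε : ℝ} (hα : EndArc T p α s)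
    (hT : MaximalCyclic T) (hpT : p ∉ T) (hε : 0 < ε) :
    ∃ C ⊆ T ∩ ball p ε, CyclicallyConnected C ∧ ∀ᶠ t in 𝓝[<] 1, α t ∈ C := by
  obtain ⟨s', -, hα'⟩ := hα.exists_inter (ball_mem_nhds p hε)
  obtain ⟨r, hr, hrb⟩ := (mem_nhdsLT_iff_exists_mem_Ico_Ioo_subset hα'.lt_one).1
    (hα'.eventually_isBypassed hT hpT hε)
  have hI : Ioo r 1 ⊆ Icc s' 1 := (Ioo_subset_Ioo_left hr.1).trans Ioo_subset_Icc_self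
  obtain ⟨C, hC, hCc, hαC⟩ := exists_cyclicallyConnected_image_subset isPreconnected_Ioo isOpen_Ioo
    (nonempty_Ioo.2 hr.2) (hα'.injOn.mono hI) fun c hc => by
      obtain ⟨J, hJ, hJc, hJα⟩ := hα'.exists_jordanCurve (fun hp => hpT hp.1) (hrb hc)
      exact ⟨J, hJ, hJc.cyclicallyConnected, hJα⟩
  refine ⟨C, hC, hCc, ?_⟩
  filter_upwards [Ioo_mem_nhdsLT hr.2] with t ht using hαC (mem_image_of_mem α ht)

lemma MaximalCyclic.exists_endArc {X : Type} [MetricSpace X] [LocallyPathConnectedSpace X]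
    {T : Set X} {p : X} (hT : MaximalCyclic T) (hp : p ∈ closure T) (hpT : p ∉ T) :
    ∃ α, EndArc T p α 0 := by
  obtain ⟨U, hU⟩ := (𝓝 p).exists_antitone_basis
  choose x hxU hxT using fun n : ℕ =>
    mem_closure_iff_nhds.1 hp _ (pathComponentIn_mem_nhds (hU.mem n))
  have hj (n : ℕ) : JoinedIn (T ∩ U n) (x n) (x (n + 1)) :=
    hT.joinedIn_inter ((hxU n).symm.trans ((hxU (n + 1)).mono (hU.antitone n.le_succ))) (hxT n)
      (hxT (n + 1))
  have hx0 : x 0 ≠ p := fun h => hpT (h ▸ hxT 0)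
  have hTU : Tendsto (fun n => T ∩ U n) atTop (𝓝 p).smallSets :=
    hU.tendsto_smallSets.smallSets_mono (.of_forall fun n => inter_subset_right)
  obtain ⟨A, hA, hA'⟩ :=
    exists_isArc_of_joinedIn (joinedIn_iUnion_of_tendsto_smallSets hTU hj) hx0
  obtain ⟨α, hc, hi, -, h1, rfl⟩ := hA'.exists_param zero_lt_one
  refine ⟨α, one_pos, hc, hi, h1, fun t ht => ?_⟩
  have htI : t ∈ Icc (0 : ℝ) 1 := Ico_subset_Icc_self ht
  rcases hA (mem_image_of_mem α htI) with h | h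
  · exact absurd (hi htI (right_mem_Icc.2 zero_le_one) (h.trans h1.symm)) ht.2.ne
  · obtain ⟨n, hn⟩ := mem_iUnion.1 h
    exact hn.1

end EndArcs

section Triangles

/-- A topological triangle with corners `o`, `x` and `y`: its sides `R` from `o` to `x`, `L` from
`o` to `y` and `D` from `x` to `y` meet only at the corners. -/
structure IsTriangle {X : Type*} [TopologicalSpace X] (R L D : Set X) (o x y : X) : Prop where
  isArc_right : IsArc R o x
  isArc_left : IsArc L o y
  isArc_opp : IsArc D x y
  right_inter_left : R ∩ L ⊆ {o}
  opp_inter_right : D ∩ R ⊆ {x}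
  opp_inter_left : D ∩ L ⊆ {y}

namespace IsTriangle

variable {X : Type*} [TopologicalSpace X] {R L D D' : Set X} {o x y x' y' : X}

lemma isArc_union (h : IsTriangle R L D o x y) : IsArc (R ∪ L) x y :=
  h.isArc_right.symm.join h.isArc_left h.right_inter_left

lemma union_inter_opp (h : IsTriangle R L D o x y) : (R ∪ L) ∩ D ⊆ {x, y} := by
  rintro z ⟨hz | hz, hzD⟩
  exacts [Or.inl (h.opp_inter_right ⟨hzD, hz⟩), Or.inr (h.opp_inter_left ⟨hzD, hz⟩)]

lemma extend_of_disjoint (h : IsTriangle R L D o x y) {A B : Set X} (hA : IsArc A x x')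
    (hB : IsArc B y' y) (hAD : A ⊆ D) (hBD : B ⊆ D) (hAB : Disjoint A B) (hD' : IsArc D' x' y')
    (hD'J : D' ∩ (R ∪ L ∪ D) ⊆ {x', y'}) : IsTriangle (R ∪ A) (L ∪ B) D' o x' y' := by
  have hRA : R ∩ A ⊆ {x} := fun z hz => h.opp_inter_right ⟨hAD hz.2, hz.1⟩
  have hLB : L ∩ B ⊆ {y} := fun z hz => h.opp_inter_left ⟨hBD hz.2, hz.1⟩
  have hRB : Disjoint R B := disjoint_left.2 fun z hzR hzB =>
    disjoint_left.1 hAB (h.opp_inter_right ⟨hBD hzB, hzR⟩ ▸ hA.left_mem) hzB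
  have hLA : Disjoint L A := disjoint_left.2 fun z hzL hzA =>
    disjoint_left.1 hAB hzA (h.opp_inter_left ⟨hAD hzA, hzL⟩ ▸ hB.right_mem)
  refine ⟨h.isArc_right.join hA hRA, h.isArc_left.join hB.symm hLB, hD', ?_, ?_, ?_⟩
  · rintro z ⟨hz | hz, hz' | hz'⟩
    exacts [h.right_inter_left ⟨hz, hz'⟩, (disjoint_left.1 hRB hz hz').elim,
      (disjoint_left.1 hLA hz' hz).elim, (disjoint_left.1 hAB hz hz').elim]
  · rintro z ⟨hzD', hz⟩
    refine (hD'J ⟨hzD', hz.imp Or.inl (@hAD z)⟩).resolve_right ?_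
    rintro rfl
    exact hz.elim (disjoint_left.1 hRB · hB.left_mem) (disjoint_left.1 hAB · hB.left_mem)
  · rintro z ⟨hzD', hz⟩
    refine (hD'J ⟨hzD', hz.imp Or.inr (@hBD z)⟩).resolve_left ?_
    rintro rfl
    exact hz.elim (disjoint_left.1 hLA · hA.right_mem) (disjoint_left.1 hAB hA.right_mem ·)

lemma exists_extend (h : IsTriangle R L D o x y) (hD' : IsArc D' x' y')
    (hD'J : D' ∩ (R ∪ L ∪ D) ⊆ {x', y'}) (hx' : x' ∈ D \ (R ∪ L)) (hy' : y' ∈ D \ (R ∪ L)) :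
    ∃ R' L' x'' y'', IsTriangle R' L' D' o x'' y'' ∧ R ⊆ R' ∧ L ⊆ L' ∧ R' ∪ L' ⊆ R ∪ L ∪ D ∧
      JoinedIn (R' ∩ D) x x'' ∧ JoinedIn (L' ∩ D) y y'' := by
  have hne {z : X} (hz : z ∈ D \ (R ∪ L)) : z ≠ x ∧ z ≠ y :=
    ⟨fun hzx => hz.2 (Or.inl (hzx ▸ h.isArc_right.right_mem)),
      fun hzy => hz.2 (Or.inr (hzy ▸ h.isArc_left.right_mem))⟩
  obtain ⟨u, v, A, hAD, B, hBD, hA, hB, hAB, hD'uv, hD'J⟩ : ∃ u v, ∃ A ⊆ D, ∃ B ⊆ D,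
      IsArc A x u ∧ IsArc B v y ∧ Disjoint A B ∧ IsArc D' u v ∧ D' ∩ (R ∪ L ∪ D) ⊆ {u, v} := by
    rcases h.isArc_opp.exists_disjoint_ends hx'.1 (hne hx').1 (hne hx').2 hy'.1 (hne hy').1
      (hne hy').2 hD'.ne with ⟨A, hAD, B, hBD, hA, hB, hAB⟩ | ⟨A, hAD, B, hBD, hA, hB, hAB⟩
    · exact ⟨x', y', A, hAD, B, hBD, hA, hB, hAB, hD', hD'J⟩
    · exact ⟨y', x', A, hAD, B, hBD, hA, hB, hAB, hD'.symm, pair_comm x' y' ▸ hD'J⟩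
  refine ⟨R ∪ A, L ∪ B, u, v, h.extend_of_disjoint hA hB hAD hBD hAB hD'uv hD'J,
    subset_union_left, subset_union_left, ?_, hA.joinedIn.mono fun z hz => ⟨Or.inr hz, hAD hz⟩,
    hB.symm.joinedIn.mono fun z hz => ⟨Or.inr hz, hBD hz⟩⟩
  rw [union_union_union_comm]
  exact union_subset_union_right _ (union_subset hAD hBD)

lemma of_loop {k : ℝ → X} (hc : Continuous k) (hIco : InjOn k (Ico 0 1)) (hIoc : InjOn k (Ioc 0 1))
    (h01 : k 0 = k 1) {s t : ℝ} (hs : 0 < s) (hst : s < t) (ht : t < 1) :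
    IsTriangle (k '' Icc 0 s) (k '' Icc t 1) (k '' Icc s t) (k 0) (k s) (k t) := by
  have hs1 : Icc 0 s ⊆ Ico 0 1 := Icc_subset_Ico_right (hst.trans ht)
  have ht1 : Icc t 1 ⊆ Ioc 0 1 := Icc_subset_Ioc (hs.trans hst) le_rfl
  refine ⟨⟨k, 0, s, hs, hc.continuousOn, hIco.mono hs1, rfl, rfl, rfl⟩,
    IsArc.symm ⟨k, t, 1, ht, hc.continuousOn, hIoc.mono ht1, rfl, h01.symm, rfl⟩,
    ⟨k, s, t, hst, hc.continuousOn, hIoc.mono (Icc_subset_Ioc hs ht.le), rfl, rfl, rfl⟩, ?_, ?_, ?_⟩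
  · rintro _ ⟨⟨u, hu, rfl⟩, v, hv, hvu⟩
    rcases hv.2.eq_or_lt with rfl | hv1
    · exact hvu.symm.trans h01.symm
    · exact absurd (hIco ⟨(hs.trans hst).le.trans hv.1, hv1⟩ (hs1 hu) hvu)
        (hu.2.trans_lt (hst.trans_le hv.1)).ne'
  · rw [← hIco.image_inter (Icc_subset_Ico hs.le ht) hs1, inter_comm,
      Icc_inter_Icc_eq_singleton hs.le hst.le, image_singleton]
  · rw [← hIoc.image_inter (Icc_subset_Ioc hs ht.le) ht1,
      Icc_inter_Icc_eq_singleton hst.le ht.le, image_singleton]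

end IsTriangle

variable {X : Type} [TopologicalSpace X] {C F J K R L D T : Set X} {a b o x y : X}

lemma IsJordanCurve.exists_triangle (hJ : IsJordanCurve J) (hK : IsClosed K) (ho : o ∈ J)
    (hoK : o ∉ K) (hJK : (J ∩ K).Nontrivial) : ∃ R L D x y, IsTriangle R L D o x y ∧
      R ∪ L ∪ D = J ∧ R ∩ K = {x} ∧ L ∩ K = {y} := by
  obtain ⟨k, hc, hIco, hIoc, h0, h1, rfl⟩ := hJ.exists_loop ho
  have hcompact : IsCompact (Icc 0 1 ∩ k ⁻¹' K) := isCompact_Icc.inter_right (hK.preimage hc)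
  have hne : (Icc 0 1 ∩ k ⁻¹' K).Nonempty := image_inter_nonempty_iff.1 hJK.nonempty
  obtain ⟨s, ⟨hs, hsK⟩, hsmin⟩ := hcompact.exists_isLeast hne
  obtain ⟨t, ⟨ht, htK⟩, htmax⟩ := hcompact.exists_isGreatest hne
  have hs0 : 0 < s := hs.1.lt_of_ne fun h => hoK (by rwa [← h0, h])
  have ht1 : t < 1 := ht.2.lt_of_ne fun h => hoK (by rwa [← h1, ← h])
  have hst : s < t := by
    refine (hsmin ⟨ht, htK⟩).lt_of_ne fun hst => hJK.not_subsingleton ?_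
    refine subsingleton_of_subset_singleton (a := k s) ?_
    rintro _ ⟨⟨u, hu, rfl⟩, huK⟩
    rw [mem_singleton_iff, (hsmin ⟨hu, huK⟩).antisymm (hst ▸ htmax ⟨hu, huK⟩)]
  have htri := IsTriangle.of_loop hc hIco hIoc (h0.trans h1.symm) hs0 hst ht1
  refine ⟨_, _, _, _, _, h0 ▸ htri, ?_, ?_, ?_⟩
  · rw [union_right_comm, ← image_union, Icc_union_Icc_eq_Icc hs.1 hst.le, ← image_union,
      Icc_union_Icc_eq_Icc ht.1 ht.2]
  · refine Subset.antisymm ?_ (singleton_subset_iff.2 ⟨htri.isArc_right.right_mem, hsK⟩)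
    rintro _ ⟨⟨u, hu, rfl⟩, huK⟩
    rw [mem_singleton_iff, hu.2.antisymm (hsmin ⟨⟨hu.1, hu.2.trans hs.2⟩, huK⟩)]
  · refine Subset.antisymm ?_ (singleton_subset_iff.2 ⟨htri.isArc_left.right_mem, htK⟩)
    rintro _ ⟨⟨u, hu, rfl⟩, huK⟩
    rw [mem_singleton_iff, (htmax ⟨⟨ht.1.trans hu.1, hu.2⟩, huK⟩).antisymm hu.1]

lemma IsJordanCurve.nontrivial_inter (hK : IsJordanCurve K) (hKJ : K ⊆ J ∪ C) (hoK : o ∈ K)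
    (hoJ : o ∈ J) (hoC : o ∉ closure C) : (K ∩ J).Nontrivial := by
  by_contra hsub
  obtain ⟨b, hb, hbo⟩ := hK.exists_ne hoK
  obtain ⟨A, B, hA, -, rfl, -⟩ := hK.exists_arcs hb hoK hbo
  refine hoC (closure_mono ?_ (hA.subset_closure_sdiff hA.right_mem))
  exact fun z hz => (hKJ (Or.inl hz.1)).resolve_left fun hzJ =>
    hz.2 (not_nontrivial_iff.1 hsub ⟨Or.inl hz.1, hzJ⟩ ⟨hoK, hoJ⟩)

variable [T2Space X]

lemma IsTriangle.isJordanCurve (h : IsTriangle R L D o x y) : IsJordanCurve (R ∪ L ∪ D) :=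
  isJordanCurve_union h.isArc_union h.isArc_opp h.union_inter_opp

lemma CyclicallyConnected.exists_jordanCurve_arc (hT : CyclicallyConnected T) (ho : o ∈ T)
    (hF : IsArc F a b) (hFT : F ⊆ T) (hoF : o ∉ F) :
    ∃ J ⊆ T, IsJordanCurve J ∧ o ∈ J ∧ ∃ c d, ∃ A ⊆ J ∩ F, IsArc A c d := by
  have hne {z : X} (hz : z ∈ F) : o ≠ z := fun h => hoF (h ▸ hz)
  obtain ⟨H, hHT, hH, hoH⟩ :=
    hT.exists_arc_through (hFT hF.left_mem) (hFT hF.right_mem) hF.ne ho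
  obtain ⟨H₁, H₂, hH₁, hH₂, rfl, hHo⟩ := hH.split hoH (hne hF.left_mem) (hne hF.right_mem)
  obtain ⟨c, hcF, Q₁, hQ₁H, hQ₁, hQ₁F⟩ :=
    hH₁.symm.exists_first_hit hF.isClosed ⟨a, hH₁.left_mem, hF.left_mem⟩ hoF
  obtain ⟨d, hdF, Q₂, hQ₂H, hQ₂, hQ₂F⟩ :=
    hH₂.exists_first_hit hF.isClosed ⟨b, hH₂.right_mem, hF.right_mem⟩ hoF
  have hcd : c ≠ d := fun h =>
    hne hcF (hHo.subset ⟨hQ₁H hQ₁.right_mem, h ▸ hQ₂H hQ₂.right_mem⟩).symm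
  obtain ⟨A, hAF, hA⟩ := hF.exists_subarc hcF hdF hcd
  have hQ : IsArc (Q₁ ∪ Q₂) c d := hQ₁.symm.join hQ₂ ((inter_subset_inter hQ₁H hQ₂H).trans hHo.le)
  refine ⟨Q₁ ∪ Q₂ ∪ A, union_subset ((union_subset_union hQ₁H hQ₂H).trans hHT) (hAF.trans hFT),
    isJordanCurve_union hQ hA ?_, Or.inl (Or.inl hQ₁.left_mem), c, d, A,
    subset_inter subset_union_right hAF, hA⟩
  rintro z ⟨hz | hz, hzA⟩
  exacts [Or.inl (hQ₁F.subset ⟨hz, hAF hzA⟩), Or.inr (hQ₂F.subset ⟨hz, hAF hzA⟩)]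

lemma IsTriangle.subset_union_of_isPreconnected (h : IsTriangle R L D o x y) {A : Set X}
    (hA : IsPreconnected A) (hAJ : A ⊆ R ∪ L ∪ D) (ho : o ∈ A) (hx : x ∉ A) (hy : y ∉ A) :
    A ⊆ R ∪ L := by
  have hinter {z : X} (hzA : z ∈ A) (hz : z ∈ R ∪ L) (hzD : z ∈ D) : False := by
    rcases h.union_inter_opp ⟨hz, hzD⟩ with rfl | rfl
    exacts [hx hzA, hy hzA]
  refine (isPreconnected_iff_subset_of_disjoint_closed.1 hA _ _
    (h.isArc_right.isClosed.union h.isArc_left.isClosed) h.isArc_opp.isClosed hAJ ?_).resolve_right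
    fun hAD => hinter ho (Or.inl h.isArc_right.left_mem) (hAD ho)
  exact eq_empty_of_forall_notMem fun z hz => hinter hz.1 hz.2.1 hz.2.2

lemma IsJordanCurve.exists_ear (hJ : IsJordanCurve J) (hC : CyclicallyConnected C)
    (hJC : (J ∩ C).Nontrivial) (hoJ : o ∈ J) (hoC : o ∉ closure C) (hF : IsArc F a b)
    (hFC : F ⊆ C) (hFJ : Disjoint F J) : ∃ x ∈ J, ∃ y ∈ J, ∃ D ⊆ (J ∪ C) ∩ closure C,
      IsArc D x y ∧ D ∩ J ⊆ {x, y} ∧ (D ∩ F).Nontrivial := by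
  obtain ⟨u, hu, v, hv, huv⟩ := hJC
  obtain ⟨K, hKJC, hK, hoK, c, d, A, hAKF, hA⟩ :=
    (hJ.cyclicallyConnected.union hC hu.1 hv.1 hu.2 hv.2 huv).exists_jordanCurve_arc
      (Or.inl hoJ) hF (hFC.trans subset_union_right) (disjoint_right.1 hFJ hoJ)
  have hAJ : Disjoint A J := hFJ.mono_left fun z hz => (hAKF hz).2
  obtain ⟨R, L, E, x, y, htri, rfl, hRJ, hLJ⟩ := hK.exists_triangle hJ.isClosed
    (hAKF hA.left_mem).1 (disjoint_left.1 hAJ hA.left_mem)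
    (hK.nontrivial_inter hKJC hoK hoJ hoC)
  have hclosure {B : Set X} {z : X} (hB : IsArc B c z) (hBJ : B ∩ J = {z})
      (hBK : B ⊆ R ∪ L ∪ E) : B ⊆ closure C := hB.subset_closure_sdiff.trans <| closure_mono
    fun w hw => (hKJC (hBK hw.1)).resolve_left fun hwJ => hw.2 (hBJ.subset ⟨hw.1, hwJ⟩)
  have hxJ : x ∈ J := (hRJ.symm.subset rfl).2
  have hyJ : y ∈ J := (hLJ.symm.subset rfl).2
  refine ⟨x, hxJ, y, hyJ, R ∪ L, subset_inter (subset_union_left.trans hKJC) (union_subset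
    (hclosure htri.isArc_right hRJ (subset_union_left.trans subset_union_left))
    (hclosure htri.isArc_left hLJ (subset_union_right.trans subset_union_left))),
    htri.isArc_union, ?_, hA.nontrivial.mono (subset_inter ?_ fun z hz => (hAKF hz).2)⟩
  · rintro z ⟨hz | hz, hzJ⟩
    exacts [Or.inl (hRJ.subset ⟨hz, hzJ⟩), Or.inr (hLJ.subset ⟨hz, hzJ⟩)]
  · exact htri.subset_union_of_isPreconnected hA.isPreconnected (fun z hz => (hAKF hz).1)
      hA.left_mem (disjoint_right.1 hAJ hxJ) (disjoint_right.1 hAJ hyJ)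

end Triangles

section Ears

variable {X : Type} [MetricSpace X] {T : Set X} {p o : X} {α : ℝ → X}

/-- A stage of the construction of a Jordan curve through a limit point `p` of `T`: a triangle in
`T` with corner `o` whose side opposite to `o` meets a cyclicly connected set near `p` which
contains the end of the arc `α`. -/
structure EarState (T : Set X) (p o : X) (α : ℝ → X) where
  R : Set X
  L : Set X
  D : Set X
  C : Set X
  x : X
  y : X
  ε : ℝ
  isTriangle : IsTriangle R L D o x y
  subset : R ∪ L ∪ D ⊆ T
  pos : 0 < ε
  disjoint : Disjoint (R ∪ L) (closedBall p ε)
  C_subset : C ⊆ T ∩ ball p ε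
  cyclicallyConnected : CyclicallyConnected C
  eventually_mem : ∀ᶠ t in 𝓝[<] 1, α t ∈ C
  nontrivial : (D ∩ C).Nontrivial

/-- The triangle of `τ` arises from that of `σ` by prolonging the two sides through `o` along the
side opposite to `o` and replacing the rest of the latter by an ear near `p`. -/
structure EarStep (σ τ : EarState T p o α) : Prop where
  ε_le : τ.ε ≤ 1 / 2 * σ.ε
  R_subset : σ.R ⊆ τ.R
  L_subset : σ.L ⊆ τ.L
  joinedIn_R : JoinedIn (τ.R ∩ σ.D) σ.x τ.x
  joinedIn_L : JoinedIn (τ.L ∩ σ.D) σ.y τ.y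
  D_subset : τ.D ⊆ closedBall p σ.ε

lemma EarState.exists_step [ProperSpace X] [LocallyPathConnectedSpace X] (σ : EarState T p o α)
    (hα : EndArc T p α 0) (hT : MaximalCyclic T) (hpT : p ∉ T) :
    ∃ τ : EarState T p o α, EarStep σ τ := by
  have hJ : IsJordanCurve (σ.R ∪ σ.L ∪ σ.D) := σ.isTriangle.isJordanCurve
  obtain ⟨r, hr, hrJ⟩ := nhds_basis_closedBall.mem_iff.1
    (hJ.isClosed.isOpen_compl.mem_nhds fun hp => hpT (σ.subset hp))
  have hε : 0 < min r (1 / 2 * σ.ε) := lt_min hr (by linarith [σ.pos])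
  have hdisj : Disjoint (σ.R ∪ σ.L ∪ σ.D) (closedBall p (min r (1 / 2 * σ.ε))) :=
    (disjoint_compl_right.mono_right hrJ).mono_right (closedBall_subset_closedBall (min_le_left ..))
  obtain ⟨C, hCT, hC, hαC⟩ := hα.exists_cyclic_tail hT hpT hε
  obtain ⟨a, b, F, hFC, hF⟩ := hα.exists_arc (S := σ.C ∩ C) (σ.eventually_mem.and hαC)
  have hσC : closure σ.C ⊆ closedBall p σ.ε :=
    (closure_mono (σ.C_subset.trans inter_subset_right)).trans closure_ball_subset_closedBall
  have hoR : o ∈ σ.R ∪ σ.L := Or.inl σ.isTriangle.isArc_right.left_mem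
  obtain ⟨x, hx, y, hy, D, hDC, hD, hDJ, hDF⟩ := hJ.exists_ear σ.cyclicallyConnected
    (σ.nontrivial.mono (inter_subset_inter_left _ subset_union_right)) (Or.inl hoR)
    (fun ho => disjoint_left.1 σ.disjoint hoR (hσC ho)) hF (fun z hz => (hFC hz).1)
    (hdisj.symm.mono_left fun z hz => ball_subset_closedBall (hCT (hFC hz).2).2)
  have hDε : D ⊆ closedBall p σ.ε := (hDC.trans inter_subset_right).trans hσC
  have hcorner {z : X} (hz : z ∈ σ.R ∪ σ.L ∪ σ.D) (hzD : z ∈ D) : z ∈ σ.D \ (σ.R ∪ σ.L) :=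
    have hzRL := disjoint_right.1 σ.disjoint (hDε hzD)
    ⟨hz.resolve_left hzRL, hzRL⟩
  obtain ⟨R, L, x', y', htri, hR, hL, hRL, hjR, hjL⟩ := σ.isTriangle.exists_extend hD hDJ
    (hcorner hx hD.left_mem) (hcorner hy hD.right_mem)
  refine ⟨⟨R, L, D, C, x', y', _, htri, union_subset (hRL.trans σ.subset) ?_, hε,
    hdisj.mono_left hRL, hCT, hC, hαC, hDF.mono ?_⟩, min_le_right .., hR, hL, hjR, hjL, hDε⟩
  · exact (hDC.trans inter_subset_left).trans
      (union_subset σ.subset (σ.C_subset.trans inter_subset_left))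
  · exact inter_subset_inter_right D fun z hz => (hFC hz).2

lemma EndArc.exists_earState [ProperSpace X] [LocallyPathConnectedSpace X] (hα : EndArc T p α 0)
    (hT : MaximalCyclic T) (hpT : p ∉ T) (ho : o ∈ T) : Nonempty (EarState T p o α) := by
  obtain ⟨ε, hε, hεo⟩ := exists_between (dist_pos.2 fun h : o = p => hpT (h ▸ ho))
  obtain ⟨r, hr, hro⟩ := exists_between hεo
  obtain ⟨C, hCT, hC, hαC⟩ := hα.exists_cyclic_tail hT hpT hε
  obtain ⟨a, b, F, hFC, hF⟩ := hα.exists_arc hαC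
  have hFr : F ⊆ closedBall p r := fun z hz =>
    closedBall_subset_closedBall hr.le (ball_subset_closedBall (hCT (hFC hz)).2)
  have hor : o ∉ closedBall p r := hro.not_ge
  obtain ⟨J, hJT, hJ, hoJ, c, d, A, hAJF, hA⟩ := hT.2.1.exists_jordanCurve_arc ho hF
    (fun z hz => (hCT (hFC hz)).1) fun hoF => hor (hFr hoF)
  have hAF := hAJF.trans inter_subset_right
  obtain ⟨R, L, D, x, y, htri, rfl, hR, hL⟩ := hJ.exists_triangle isClosed_closedBall hoJ hor
    (hA.nontrivial.mono (hAJF.trans (inter_subset_inter_right J hFr)))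
  have hfar {B : Set X} {z : X} (hB : IsArc B o z) (hBz : B ∩ closedBall p r = {z}) :
      Disjoint B (closedBall p ε) := by
    have hlt : B \ {z} ⊆ {w | r < dist w p} := fun w hw => show r < dist w p from
      lt_of_not_ge fun hwr => hw.2 (hBz.subset ⟨hw.1, mem_closedBall.2 hwr⟩)
    have hle : B ⊆ {w | r ≤ dist w p} := hB.subset_closure_sdiff.trans ((closure_mono hlt).trans
      (closure_lt_subset_le continuous_const (continuous_id.dist continuous_const)))
    exact disjoint_left.2 fun w hw hwε => (hr.trans_le (hle hw)).not_ge hwε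
  have hdisj := (hfar htri.isArc_right hR).union_left (hfar htri.isArc_left hL)
  refine ⟨⟨R, L, D, C, x, y, ε, htri, hJT, hε, hdisj, hCT, hC, hαC,
    hA.nontrivial.mono fun z hz => ⟨(hAJF hz).1.resolve_left ?_, hFC (hAF hz)⟩⟩⟩
  exact disjoint_right.1 hdisj (ball_subset_closedBall (hCT (hFC (hAF hz))).2)

lemma EarStep.tendsto_D {σ : ℕ → EarState T p o α} (hσ : ∀ n, EarStep (σ n) (σ (n + 1))) :
    Tendsto (fun n => (σ n).D) atTop (𝓝 p).smallSets := by
  have hεle (n : ℕ) : (σ n).ε ≤ (1 / 2) ^ n * (σ 0).ε :=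
    le_geom (u := fun n => (σ n).ε) one_half_pos.le n fun k _ => (hσ k).ε_le
  have hε : Tendsto (fun n => (σ n).ε) atTop (𝓝 0) := by
    refine squeeze_zero (fun n => (σ n).pos.le) hεle ?_
    simpa using (tendsto_pow_atTop_nhds_zero_of_lt_one (r := (1 / 2 : ℝ)) (by norm_num)
      (by norm_num)).mul_const (σ 0).ε
  exact (tendsto_add_atTop_iff_nat 1).1 <| ((tendsto_closedBall_smallSets p).comp hε).smallSets_mono
    (.of_forall fun n => (hσ n).D_subset)

lemma exists_isArc_of_rays {R D : ℕ → Set X} {x : ℕ → X} (ho : JoinedIn (R 0) o (x 0))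
    (hx : ∀ n, JoinedIn (R (n + 1) ∩ D n) (x n) (x (n + 1)))
    (hD : Tendsto D atTop (𝓝 p).smallSets) (hop : o ≠ p) :
    ∃ A ⊆ insert p (⋃ n, R n), IsArc A o p := by
  have htail := joinedIn_iUnion_of_tendsto_smallSets
    (hD.smallSets_mono (.of_forall fun n => inter_subset_right)) hx
  refine exists_isArc_of_joinedIn ((ho.mono ?_).trans (htail.mono ?_)) hop
  · exact (subset_iUnion R 0).trans (subset_insert ..)
  · exact insert_subset_insert (iUnion_subset fun n =>
      inter_subset_left.trans (subset_iUnion R (n + 1)))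

-- Attaching ears near `p` again and again, the two sides through `o` grow into two arcs from `o`
-- to `p`, and these form a Jordan curve through `p`.
lemma MaximalCyclic.isClosed [ProperSpace X] [LocallyPathConnectedSpace X] (hT : MaximalCyclic T) :
    IsClosed T := by
  refine isClosed_of_closure_subset fun p hp => by_contra fun hpT => ?_
  obtain ⟨α, hα⟩ := hT.exists_endArc hp hpT
  have hoT : α 0 ∈ T := hα.mem 0 ⟨le_rfl, one_pos⟩
  have hop : α 0 ≠ p := fun h => hpT (h ▸ hoT)
  obtain ⟨σ₀⟩ := hα.exists_earState hT hpT hoT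
  choose next hnext using fun σ : EarState T p (α 0) α => σ.exists_step hα hT hpT
  let σ (n : ℕ) : EarState T p (α 0) α := next^[n] σ₀
  have hσ (n : ℕ) : EarStep (σ n) (σ (n + 1)) := by
    simpa only [σ, Function.iterate_succ_apply'] using hnext _
  have hR : Monotone fun n => (σ n).R := monotone_nat_of_le_succ fun n => (hσ n).R_subset
  have hL : Monotone fun n => (σ n).L := monotone_nat_of_le_succ fun n => (hσ n).L_subset
  have hD := EarStep.tendsto_D hσ
  obtain ⟨A, hAR, hA⟩ := exists_isArc_of_rays (R := fun n => (σ n).R)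
    (σ 0).isTriangle.isArc_right.joinedIn (fun n => (hσ n).joinedIn_R) hD hop
  obtain ⟨B, hBL, hB⟩ := exists_isArc_of_rays (R := fun n => (σ n).L)
    (σ 0).isTriangle.isArc_left.joinedIn (fun n => (hσ n).joinedIn_L) hD hop
  have hAB : A ∩ B ⊆ {α 0, p} := fun z ⟨hzA, hzB⟩ => by
    by_cases hzp : z = p
    · exact Or.inr hzp
    obtain ⟨m, hm⟩ := mem_iUnion.1 ((hAR hzA).resolve_left hzp)
    obtain ⟨n, hn⟩ := mem_iUnion.1 ((hBL hzB).resolve_left hzp)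
    exact Or.inl ((σ (max m n)).isTriangle.right_inter_left
      ⟨hR (le_max_left m n) hm, hL (le_max_right m n) hn⟩)
  obtain ⟨c, hcA, hco, hcp⟩ := hA.exists_ne_endpoints
  obtain ⟨m, hm⟩ := mem_iUnion.1 ((hAR hcA).resolve_left hcp)
  exact hpT (hT.subset_of_mem (isJordanCurve_union hA hB hAB).cyclicallyConnected hoT
    ((σ m).subset (Or.inl (Or.inl hm))) (Or.inl hA.left_mem) (Or.inl hcA) hco.symm
    (Or.inl hA.right_mem))

end Ears

section Arms

section IsArm

variable {X : Type*} [TopologicalSpace X] {A B K V : Set X} {p q r v : X}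

/-- `A` is an arm of `v`: a possibly degenerate arc in `V` from `v` to `r` meeting `K` only
in `r`. -/
structure IsArm (K V A : Set X) (v r : X) : Prop where
  subset : A ⊆ V
  inter_eq : A ∩ K = {r}
  isArc_or : IsArc A v r ∨ A = {v} ∧ v = r

namespace IsArm

lemma left_mem (h : IsArm K V A v r) : v ∈ A := by
  rcases h.isArc_or with h | ⟨rfl, -⟩
  exacts [h.left_mem, rfl]

lemma right_mem_inter (h : IsArm K V A v r) : r ∈ A ∩ K := h.inter_eq.superset rfl

lemma right_mem (h : IsArm K V A v r) : r ∈ A := h.right_mem_inter.1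

lemma right_mem_base (h : IsArm K V A v r) : r ∈ K := h.right_mem_inter.2

lemma eq_right (h : IsArm K V A v r) (hp : p ∈ A) (hpK : p ∈ K) : p = r :=
  h.inter_eq.subset ⟨hp, hpK⟩

lemma isCompact (h : IsArm K V A v r) : IsCompact A := by
  rcases h.isArc_or with h | ⟨rfl, -⟩
  exacts [h.isCompact, isCompact_singleton]

lemma isPreconnected (h : IsArm K V A v r) : IsPreconnected A := by
  rcases h.isArc_or with h | ⟨rfl, -⟩
  exacts [h.isPreconnected, isPreconnected_singleton]

lemma joinedIn (h : IsArm K V A v r) : JoinedIn A v r := by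
  rcases h.isArc_or with h | ⟨rfl, rfl⟩
  exacts [h.joinedIn, JoinedIn.refl rfl]

lemma exists_subarc (h : IsArm K V A v r) (hp : p ∈ A) (hq : q ∈ A) (hpq : p ≠ q) :
    ∃ B ⊆ A, IsArc B p q := by
  rcases h.isArc_or with h | ⟨rfl, -⟩
  exacts [h.exists_subarc hp hq hpq, absurd (hp.trans hq.symm) hpq]

lemma of_subarc (h : IsArm K V A v r) (hB : IsArc B p r) (hBA : B ⊆ A) : IsArm K V B p r :=
  ⟨hBA.trans h.subset, Subset.antisymm (fun _ hz => h.eq_right (hBA hz.1) hz.2)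
    (singleton_subset_iff.2 ⟨hB.right_mem, h.right_mem_base⟩), Or.inl hB⟩

lemma singleton (hv : v ∈ V) (hK : v ∈ K) : IsArm K V {v} v v :=
  ⟨singleton_subset_iff.2 hv, inter_eq_left.2 (singleton_subset_iff.2 hK), Or.inr ⟨rfl, rfl⟩⟩

lemma split [T2Space X] (h : IsArm K V A v r) (hp : p ∈ A) :
    ∃ A₁ A₂, IsClosed A₁ ∧ v ∈ A₁ ∧ IsArm K V A₂ p r ∧ A₁ ∪ A₂ = A ∧ A₁ ∩ A₂ = {p} := by
  by_cases hpv : p = v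
  · subst hpv
    have hpA : {p} ⊆ A := singleton_subset_iff.2 hp
    exact ⟨{p}, A, isClosed_singleton, rfl, h, union_eq_self_of_subset_left hpA,
      inter_eq_left.2 hpA⟩
  by_cases hpr : p = r
  · subst hpr
    have hpA : {p} ⊆ A := singleton_subset_iff.2 hp
    exact ⟨A, {p}, h.isCompact.isClosed, h.left_mem, singleton (h.subset hp) h.right_mem_base,
      union_eq_self_of_subset_right hpA, inter_eq_right.2 hpA⟩
  rcases h.isArc_or with hA | ⟨rfl, -⟩
  · obtain ⟨A₁, A₂, h₁, h₂, hu, hi⟩ := hA.split hp hpv hpr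
    exact ⟨A₁, A₂, h₁.isClosed, h₁.left_mem, h.of_subarc h₂ (subset_union_right.trans hu.subset),
      hu, hi⟩
  · exact absurd hp hpv

end IsArm

end IsArm

/-- A closed set `K` and an open path-connected set `V` meeting it, such that `K` contains every
arc between two of its points as well as every Jordan curve in `V`. This is what makes the arms of
the points of `V` unique. -/
structure ArmSetting {X : Type} [TopologicalSpace X] (K V : Set X) : Prop where
  isClosed : IsClosed K
  isOpen : IsOpen V
  isPathConnected : IsPathConnected V
  inter_nonempty : (V ∩ K).Nonempty
  arc_subset : ∀ {A a b}, IsArc A a b → a ∈ K → b ∈ K → A ⊆ K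
  jordanCurve_subset : ∀ {J}, IsJordanCurve J → J ⊆ V → J ⊆ K

namespace ArmSetting

section Unique

variable {X : Type} [TopologicalSpace X] [T2Space X] {A A' B K P Q V : Set X}
  {a p q r r' v v' : X}

lemma bridge_subset (hS : ArmSetting K V) (hA : IsArm K V A v r) (hB : IsArc B p q) (hBV : B ⊆ V)
    (hp : p ∈ A ∪ K) (hq : q ∈ A ∪ K) (hBA : B ∩ (A ∪ K) ⊆ {p, q}) : B ⊆ K := by
  by_cases hpq : p ∈ A ∧ q ∈ A
  · obtain ⟨C, hCA, hC⟩ := hA.exists_subarc hpq.1 hpq.2 hB.ne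
    exact subset_union_left.trans (hS.jordanCurve_subset (isJordanCurve_union hB hC fun z hz =>
      hBA ⟨hz.1, Or.inl (hCA hz.2)⟩) (union_subset hBV (hCA.trans hA.subset)))
  have hmixed {p q : X} (hB : IsArc B p q) (hBA : B ∩ (A ∪ K) ⊆ {p, q}) (hp : p ∈ A)
      (hqA : q ∉ A) (hq : q ∈ K) : B ⊆ K := by
    by_cases hpr : r = p
    · exact hS.arc_subset hB (hpr ▸ hA.right_mem_base) hq
    obtain ⟨C, hCA, hC⟩ := hA.exists_subarc hA.right_mem hp hpr
    refine subset_union_right.trans (hS.arc_subset (hC.join hB fun z hz => ?_)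
      hA.right_mem_base hq)
    exact (hBA ⟨hz.2, Or.inl (hCA hz.1)⟩).resolve_right fun h => hqA (h ▸ hCA hz.1)
  by_cases hpA : p ∈ A
  · have hqA : q ∉ A := fun h => hpq ⟨hpA, h⟩
    exact hmixed hB hBA hpA hqA (hq.resolve_left hqA)
  by_cases hqA : q ∈ A
  · exact hmixed hB.symm (by rwa [pair_comm]) hqA hpA (hp.resolve_left hpA)
  · exact hS.arc_subset hB (hp.resolve_left hpA) (hq.resolve_left hqA)

lemma arm_subset (hS : ArmSetting K V) (hA : IsArm K V A v r) (hA' : IsArm K V A' v' r')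
    (hv : v ∈ A') : A ⊆ A' := by
  rcases hA.isArc_or with hArc | ⟨rfl, -⟩
  · have hclosed := hA'.isCompact.isClosed
    have hsub : A \ {r} ⊆ A' := fun c hc => by
      by_contra hcA'
      have hcK : c ∉ K := fun h => hc.2 (hA.eq_right hc.1 h)
      obtain ⟨B, hBA, p, hp, q, hq, hB, hcB, hBi⟩ := hArc.exists_gap (hclosed.union hS.isClosed)
        (Or.inl hv) (Or.inr hA.right_mem_base) hc.1 (not_or_intro hcA' hcK)
      exact hcK (hS.bridge_subset hA' hB (hBA.trans hA.subset) hp hq hBi hcB)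
    exact hArc.subset_closure_sdiff.trans (closure_minimal hsub hclosed)
  · exact singleton_subset_iff.2 hv

lemma arm_unique (hS : ArmSetting K V) (hA : IsArm K V A v r) (hA' : IsArm K V A' v r') : A = A' :=
  (hS.arm_subset hA hA' hA'.left_mem).antisymm (hS.arm_subset hA' hA hA.left_mem)

lemma right_unique (hS : ArmSetting K V) (hA : IsArm K V A v r) (hA' : IsArm K V A' v' r')
    (hv : v ∈ A') : r = r' :=
  hA'.eq_right (hS.arm_subset hA hA' hv hA.right_mem) hA.right_mem_base

lemma arm_ssubset (hS : ArmSetting K V) (hA : IsArm K V A v r) (hP : IsArm K V P p r')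
    (hp : p ∈ A) (hpv : p ≠ v) : P ⊂ A := by
  obtain ⟨A₁, A₂, -, hv, hA₂, -, hi⟩ := hA.split hp
  refine ssubset_iff_exists.2 ⟨hS.arm_subset hP hA hp, v, hA.left_mem, fun h => ?_⟩
  exact hpv (hi.subset ⟨hv, hS.arm_unique hP hA₂ ▸ h⟩).symm

lemma mem_arm_or_mem_arm (hS : ArmSetting K V) (hA : IsArm K V A v r) (hP : IsArm K V P p r')
    (hQ : IsArm K V Q q a) (hp : p ∈ A) (hq : q ∈ A) : q ∈ P ∨ p ∈ Q := by
  obtain ⟨A₁, A₂, hA₁, -, hA₂, hu, hi⟩ := hA.split hp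
  rw [hS.arm_unique hP hA₂]
  refine or_iff_not_imp_left.2 fun hqA₂ => ?_
  have haA₂ : a ∈ A₂ := hS.right_unique hQ hA hq ▸ hA₂.right_mem
  obtain ⟨z, hzQ, hz⟩ := isPreconnected_closed_iff.1 hQ.isPreconnected A₁ A₂ hA₁
    hA₂.isCompact.isClosed ((hS.arm_subset hQ hA hq).trans hu.superset)
    ⟨q, hQ.left_mem, (hu.superset hq).resolve_right hqA₂⟩ ⟨a, hQ.right_mem, haA₂⟩
  exact hi.subset hz ▸ hzQ

end Unique

section Exists

variable {X : Type} [MetricSpace X] {A A' K M V : Set X} {r r' v v' x : X}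

lemma exists_arm_subset (hS : ArmSetting K V) {S : Set X} (hSV : S ⊆ V) (hvx : JoinedIn S v x)
    (hx : x ∈ K) : ∃ A ⊆ S, ∃ r, IsArm K V A v r := by
  by_cases hv : v ∈ K
  · exact ⟨{v}, singleton_subset_iff.2 hvx.source_mem, v,
      IsArm.singleton (hSV hvx.source_mem) hv⟩
  · obtain ⟨B, hBS, hB⟩ := exists_isArc_of_joinedIn hvx fun h => hv (h ▸ hx)
    obtain ⟨r, -, A, hAB, hA, hAK⟩ := hB.exists_first_hit hS.isClosed ⟨x, hB.right_mem, hx⟩ hv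
    exact ⟨A, hAB.trans hBS, r, (hAB.trans hBS).trans hSV, hAK, Or.inl hA⟩

lemma exists_arm (hS : ArmSetting K V) (hv : v ∈ V) : ∃ A r, IsArm K V A v r := by
  obtain ⟨x, hxV, hxK⟩ := hS.inter_nonempty
  obtain ⟨A, -, hA⟩ := hS.exists_arm_subset Subset.rfl (hS.isPathConnected.joinedIn v hv x hxV) hxK
  exact ⟨A, hA⟩

lemma arm_subset_union (hS : ArmSetting K V) (hM : IsPathConnected M) (hMV : M ⊆ V) (hv : v ∈ M)
    (hv' : v' ∈ M) (hA : IsArm K V A v r) (hA' : IsArm K V A' v' r') : A' ⊆ A ∪ M := by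
  have hjoined : JoinedIn (A ∪ M) v' r := ((hM.joinedIn v' hv' v hv).mono subset_union_right).trans
    (hA.joinedIn.mono subset_union_left)
  obtain ⟨B, hBs, r'', hB⟩ := hS.exists_arm_subset (union_subset hA.subset hMV) hjoined
    hA.right_mem_base
  exact (hS.arm_unique hA' hB).subset.trans hBs

end Exists

end ArmSetting

end Arms

section Height

variable {X : Type} [MetricSpace X] {A A' K M V : Set X} {r r' v v' p : X} {h : X → ℝ} {ε : ℝ}

/-- A height above `K`: it vanishes on `K` and is nonnegative and injective along the arms. -/
structure IsHeight (K V : Set X) (h : X → ℝ) : Prop where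
  continuousOn : ContinuousOn h V
  eq_zero : ∀ v ∈ V ∩ K, h v = 0
  nonneg : ∀ {A v r}, IsArm K V A v r → 0 ≤ h v
  injOn : ∀ {A v r}, IsArm K V A v r → InjOn h A

namespace ArmSetting

lemma exists_mem_arm_dist_le (hS : ArmSetting K V) (hM : IsPathConnected M) (hMV : M ⊆ V)
    (hMε : ∀ a ∈ M, ∀ b ∈ M, dist a b ≤ ε) (hv : v ∈ M) (hv' : v' ∈ M) (hA : IsArm K V A v r)
    (hA' : IsArm K V A' v' r') : ∀ z ∈ A', ∃ a ∈ A, dist z a ≤ ε := by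
  have hε : 0 ≤ ε := dist_nonneg.trans (hMε v hv v hv)
  rintro z hz
  rcases hS.arm_subset_union hM hMV hv hv' hA hA' hz with hzA | hzM
  exacts [⟨z, hzA, (dist_self z).trans_le hε⟩, ⟨v, hA.left_mem, hMε z hzM v hv⟩]

lemma dist_right_le (hS : ArmSetting K V) (hM : IsPathConnected M) (hMV : M ⊆ V)
    (hMε : ∀ a ∈ M, ∀ b ∈ M, dist a b ≤ ε) (hv : v ∈ M) (hv' : v' ∈ M) (hA : IsArm K V A v r)
    (hA' : IsArm K V A' v' r') : dist r r' ≤ ε := by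
  have hε : 0 ≤ ε := dist_nonneg.trans (hMε v hv v hv)
  rcases hS.arm_subset_union hM hMV hv hv' hA hA' hA'.right_mem with h | h
  · rw [hA.eq_right h hA'.right_mem_base, dist_self]
    exact hε
  rcases hS.arm_subset_union hM hMV hv' hv hA' hA hA.right_mem with h' | h'
  · rw [hA'.eq_right h' hA.right_mem_base, dist_self]
    exact hε
  · exact hMε r h' r' h

variable {q : ℕ → X}

lemma height_lt (hS : ArmSetting K V) (hq : DenseRange q)
    (hh : ∀ {A v r}, IsArm K V A v r → h v = whitney q {r} - whitney q A) (hA : IsArm K V A v r)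
    (hA' : IsArm K V A' p r') (hp : p ∈ A) (hpv : p ≠ v) : h p < h v := by
  rw [hh hA, hh hA', hS.right_unique hA' hA hp]
  exact sub_lt_sub_left (whitney_lt_of_ssubset ⟨p, hA'.left_mem⟩ hA'.isCompact.isClosed
    (hS.arm_ssubset hA hA' hp hpv) fun x _ => hq x) _

lemma dist_height_le (hS : ArmSetting K V)
    (hh : ∀ {A v r}, IsArm K V A v r → h v = whitney q {r} - whitney q A) (hM : IsPathConnected M)
    (hMV : M ⊆ V) (hMε : ∀ a ∈ M, ∀ b ∈ M, dist a b ≤ ε) (hv : v ∈ M) (hv' : v' ∈ M) :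
    dist (h v) (h v') ≤ 2 * ε := by
  have hle {v v' : X} (hv : v ∈ M) (hv' : v' ∈ M) : h v ≤ h v' + 2 * ε := by
    obtain ⟨A, r, hA⟩ := hS.exists_arm (hMV hv)
    obtain ⟨A', r', hA'⟩ := hS.exists_arm (hMV hv')
    have harm : whitney q A' ≤ whitney q A + ε := whitney_le_add ⟨v, hA.left_mem⟩
      (hS.exists_mem_arm_dist_le hM hMV hMε hv' hv hA' hA)
    have hright : whitney q {r} ≤ whitney q {r'} + ε := by
      refine whitney_le_add (singleton_nonempty r') ?_
      rintro _ rfl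
      exact ⟨r, rfl, hS.dist_right_le hM hMV hMε hv' hv hA' hA⟩
    rw [hh hA, hh hA']
    linarith
  rw [Real.dist_eq, abs_sub_le_iff]
  constructor <;> linarith [hle hv hv', hle hv' hv]

lemma exists_isHeight [TopologicalSpace.SeparableSpace X] [LocallyPathConnectedSpace X]
    (hS : ArmSetting K V) : ∃ h, IsHeight K V h := by
  have : Nonempty X := hS.inter_nonempty.to_type
  let q := TopologicalSpace.denseSeq X
  have hq : DenseRange q := TopologicalSpace.denseRange_denseSeq X
  have hexists (v : X) : ∃ s, ∀ {A r}, IsArm K V A v r → s = whitney q {r} - whitney q A := by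
    by_cases hv : v ∈ V
    · obtain ⟨A, r, hA⟩ := hS.exists_arm hv
      refine ⟨whitney q {r} - whitney q A, fun hA' => ?_⟩
      rw [hS.arm_unique hA hA', hS.right_unique hA hA' hA'.left_mem]
    · exact ⟨0, fun hA => absurd (hA.subset hA.left_mem) hv⟩
  choose h hh using hexists
  have hzero (v : X) (hv : v ∈ V ∩ K) : h v = 0 :=
    (hh v (IsArm.singleton hv.1 hv.2)).trans (sub_self _)
  refine ⟨h, fun v hv => ?_, hzero, fun {A v r} hA => ?_, fun {A v r} hA p hp p' hp' hpp' => ?_⟩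
  · refine (Metric.continuousAt_iff'.2 fun ε hε => ?_).continuousWithinAt
    obtain ⟨M, ⟨hM, hMc⟩, hMsub⟩ := (path_connected_basis v).mem_iff.1
      (inter_mem (hS.isOpen.mem_nhds hv) (ball_mem_nhds v (show 0 < ε / 6 by positivity)))
    have hMε : ∀ a ∈ M, ∀ b ∈ M, dist a b ≤ ε / 3 := fun a ha b hb => by
      linarith [dist_triangle_right a b v, mem_ball.1 (hMsub ha).2, mem_ball.1 (hMsub hb).2]
    filter_upwards [hM] with v' hv'
    have := hS.dist_height_le (hh _) hMc (fun z hz => (hMsub hz).1) hMε hv' (mem_of_mem_nhds hM)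
    linarith
  · have hr := IsArm.singleton (hA.subset hA.right_mem) hA.right_mem_base
    rw [← hzero r ⟨hA.subset hA.right_mem, hA.right_mem_base⟩]
    by_cases hrv : r = v
    · rw [hrv]
    · exact (hS.height_lt hq (hh _) hA hr hA.right_mem hrv).le
  · by_contra hne
    obtain ⟨P, a, hP⟩ := hS.exists_arm (hA.subset hp)
    obtain ⟨P', b, hP'⟩ := hS.exists_arm (hA.subset hp')
    rcases hS.mem_arm_or_mem_arm hA hP hP' hp hp' with hp'P | hpP'
    · exact (hS.height_lt hq (hh _) hP hP' hp'P (Ne.symm hne)).ne' hpp'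
    · exact (hS.height_lt hq (hh _) hP' hP hpP' hne).ne hpp'

end ArmSetting

end Height

section Deformation

/-- `G` is a strong deformation retraction of `V` onto `V ∩ K`. It is a function on the whole space,
its values outside `V` being irrelevant. -/
structure IsStrongDeformation {X : Type*} [TopologicalSpace X] (V K : Set X)
    (G : X × unitInterval → X) : Prop where
  continuousOn : ContinuousOn G (V ×ˢ univ)
  mem : ∀ v ∈ V, ∀ t, G (v, t) ∈ V
  apply_zero : ∀ v ∈ V, G (v, 0) = v
  apply_one_mem : ∀ v ∈ V, G (v, 1) ∈ K
  apply_eq : ∀ v ∈ V ∩ K, ∀ t, G (v, t) = v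

lemma exists_nhds_forall_mem_of_injOn {X Y : Type*} [TopologicalSpace X] [TopologicalSpace Y]
    [T2Space Y] {A W : Set X} {f : X → Y} {p : X} (hA : IsCompact A) (hf : ContinuousOn f A)
    (hinj : InjOn f A) (hp : p ∈ A) (hW : W ∈ 𝓝 p) : ∃ N ∈ 𝓝 (f p), ∀ z ∈ A, f z ∈ N → z ∈ W := by
  have : CompactSpace A := isCompact_iff_compactSpace.1 hA
  have hemb := (continuousOn_iff_continuous_domRestrict.1 hf).isClosedEmbedding hinj.injective
  obtain ⟨N, hN, hNW⟩ := (hemb.isInducing.nhds_eq_comap ⟨p, hp⟩).ge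
    (continuous_subtype_val.continuousAt.preimage_mem_nhds hW)
  exact ⟨N, hN, fun z hz hzN => @hNW ⟨z, hz⟩ hzN⟩

section Height

variable {X : Type} [MetricSpace X] {A K V W : Set X} {r v p : X} {h : X → ℝ}

lemma IsHeight.exists_mem_arm (hh : IsHeight K V h) (hA : IsArm K V A v r) (t : unitInterval) :
    ∃ p ∈ A, h p = (1 - (t : ℝ)) * h v := by
  refine hA.isPreconnected.intermediate_value hA.right_mem hA.left_mem
    (hh.continuousOn.mono hA.subset) ⟨?_, ?_⟩
  · rw [hh.eq_zero r ⟨hA.subset hA.right_mem, hA.right_mem_base⟩]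
    exact mul_nonneg (sub_nonneg.2 t.2.2) (hh.nonneg hA)
  · exact mul_le_of_le_one_left (hh.nonneg hA) (sub_le_self 1 t.2.1)

lemma IsHeight.exists_nhds (hh : IsHeight K V h) (hV : IsOpen V) (hA : IsArm K V A v r)
    (hp : p ∈ A) (hW : W ∈ 𝓝 p) : ∃ N ∈ 𝓝 (h p), ∃ M ∈ 𝓝 v, ∀ z ∈ A ∪ M, h z ∈ N → z ∈ W := by
  obtain ⟨N, hN, hNW⟩ := exists_nhds_forall_mem_of_injOn hA.isCompact
    (hh.continuousOn.mono hA.subset) (hh.injOn hA) hp hW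
  by_cases hvp : v = p
  · subst hvp
    exact ⟨N, hN, W, hW, fun z hz hzN => hz.elim (fun hzA => hNW z hzA hzN) id⟩
  · obtain ⟨M, N', hM, hN', hMN⟩ := t2_separation_nhds ((hh.injOn hA).ne hA.left_mem hp hvp)
    have hv := hh.continuousOn.continuousAt (hV.mem_nhds (hA.subset hA.left_mem))
    exact ⟨N ∩ N', inter_mem hN hN', h ⁻¹' M, hv.preimage_mem_nhds hM, fun z hz hzN =>
      hz.elim (fun hzA => hNW z hzA hzN.1) fun hzM => (disjoint_left.1 hMN hzM hzN.2).elim⟩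

lemma IsHeight.continuousOn_deformation [LocallyPathConnectedSpace X] (hh : IsHeight K V h)
    (hS : ArmSetting K V) {G : X × unitInterval → X}
    (hG : ∀ q, ∀ {A r}, IsArm K V A q.1 r → G q ∈ A ∧ h (G q) = (1 - (q.2 : ℝ)) * h q.1) :
    ContinuousOn G (V ×ˢ univ) := by
  rintro ⟨v, t⟩ ⟨hv, -⟩
  refine ContinuousAt.continuousWithinAt fun W hW => ?_
  change ∀ᶠ q in 𝓝 (v, t), G q ∈ W
  obtain ⟨A, r, hA⟩ := hS.exists_arm hv
  obtain ⟨hGA, hGh⟩ := hG (v, t) hA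
  obtain ⟨N, hN, M, hM, hNM⟩ := hh.exists_nhds hS.isOpen hA hGA hW
  obtain ⟨L, ⟨hL, hLc⟩, hLsub⟩ := (path_connected_basis v).mem_iff.1
    (inter_mem (hS.isOpen.mem_nhds hv) hM)
  have hhv : ContinuousAt h v := hh.continuousOn.continuousAt (hS.isOpen.mem_nhds hv)
  have hscaled : ContinuousAt (fun q : X × unitInterval => (1 - (q.2 : ℝ)) * h q.1) (v, t) :=
    (by fun_prop : ContinuousAt (fun q : X × unitInterval => 1 - (q.2 : ℝ)) (v, t)).mul
      (hhv.comp (x := (v, t)) continuousAt_fst)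
  filter_upwards [continuousAt_fst.preimage_mem_nhds hL,
    hscaled.preimage_mem_nhds (hGh ▸ hN)] with q hqL hqN
  obtain ⟨A', r', hA'⟩ := hS.exists_arm (hLsub hqL).1
  refine hNM (G q) (union_subset_union_right A (fun z hz => (hLsub hz).2) ?_)
    ((hG q hA').2 ▸ hqN)
  exact hS.arm_subset_union hLc (fun z hz => (hLsub hz).1) (mem_of_mem_nhds hL) hqL hA hA'
    (hG q hA').1

-- The deformation moves `v` along its arm, scaling the height by `1 - t`.
lemma ArmSetting.exists_isStrongDeformation [TopologicalSpace.SeparableSpace X]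
    [LocallyPathConnectedSpace X] (hS : ArmSetting K V) : ∃ G, IsStrongDeformation V K G := by
  obtain ⟨h, hh⟩ := hS.exists_isHeight
  have hexists (q : X × unitInterval) : ∃ p, ∀ {A r}, IsArm K V A q.1 r →
      p ∈ A ∧ h p = (1 - (q.2 : ℝ)) * h q.1 := by
    by_cases hq : q.1 ∈ V
    · obtain ⟨A, r, hA⟩ := hS.exists_arm hq
      obtain ⟨p, hp⟩ := hh.exists_mem_arm hA q.2
      exact ⟨p, fun hA' => hS.arm_unique hA hA' ▸ hp⟩
    · exact ⟨q.1, fun hA => absurd (hA.subset hA.left_mem) hq⟩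
  choose G hG using hexists
  refine ⟨G, hh.continuousOn_deformation hS hG, fun v hv t => ?_, fun v hv => ?_,
    fun v hv => ?_, fun v hv t => ?_⟩
  · obtain ⟨A, r, hA⟩ := hS.exists_arm hv
    exact hA.subset (hG (v, t) hA).1
  · obtain ⟨A, r, hA⟩ := hS.exists_arm hv
    exact hh.injOn hA (hG (v, 0) hA).1 hA.left_mem (by simpa using (hG (v, 0) hA).2)
  · obtain ⟨A, r, hA⟩ := hS.exists_arm hv
    have hr := hh.eq_zero r ⟨hA.subset hA.right_mem, hA.right_mem_base⟩
    rw [hh.injOn hA (hG (v, 1) hA).1 hA.right_mem (by simpa [hr] using (hG (v, 1) hA).2)]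
    exact hA.right_mem_base
  · exact (hG (v, t) (IsArm.singleton hv.1 hv.2)).1

end Height

end Deformation

section Contraction

section Gluing

lemma exists_eq_of_inter_subset_singleton {X Y : Type*} {x : X} {I : Set (Set X)}
    {W : Set X → Set X} {c : Set X → X × Y → X} (hW : ∀ T ∈ I, W T ⊆ T)
    (hinter : ∀ T ∈ I, ∀ S ∈ I, T ≠ S → T ∩ S ⊆ {x}) (hc : ∀ T ∈ I, ∀ t, c T (x, t) = x) :
    ∃ C : X × Y → X, (∀ t, C (x, t) = x) ∧ ∀ T ∈ I, ∀ w ∈ W T, ∀ t, C (w, t) = c T (w, t) := by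
  classical
  have hexists (w : X) : ∃ T, w ≠ x → ∀ S ∈ I, w ∈ S → T = S := by
    by_cases hw : ∃ T ∈ I, w ∈ T
    · obtain ⟨T, hT, hwT⟩ := hw
      exact ⟨T, fun hwx S hS hwS => by_contra fun hne => hwx (hinter T hT S hS hne ⟨hwT, hwS⟩)⟩
    · exact ⟨∅, fun _ S hS hwS => absurd ⟨S, hS, hwS⟩ hw⟩
  choose τ hτ using hexists
  refine ⟨fun q => if q.1 = x then x else c (τ q.1) q, fun t => if_pos rfl, fun T hT w hw t => ?_⟩
  by_cases hwx : w = x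
  · subst hwx
    exact (if_pos rfl).trans (hc T hT t).symm
  · simp only [if_neg hwx, hτ w hwx T hT (hW T hT hw)]

variable {X : Type*} [TopologicalSpace X] {x : X}

lemma continuousOn_of_finite_isClosed_cover {Y ι : Type*} [TopologicalSpace Y] {Z : Set X}
    {I : Set ι} {F : ι → Set X} {f : X → Y} (hI : I.Finite) (hF : ∀ i ∈ I, IsClosed (F i))
    (hZ : Z ⊆ ⋃ i ∈ I, F i) (hf : ∀ i ∈ I, ContinuousOn f (Z ∩ F i)) : ContinuousOn f Z := by
  intro z hz
  rw [← inter_eq_left.2 hZ, inter_iUnion₂, ContinuousWithinAt, nhdsWithin_biUnion hI, tendsto_iSup]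
  refine fun i => tendsto_iSup.2 fun hi => ?_
  by_cases hzi : z ∈ F i
  · exact hf i hi z ⟨hz, hzi⟩
  · exact continuousWithinAt_of_notMem_closure fun h =>
      hzi ((hF i hi).closure_subset_iff.2 inter_subset_right h)

lemma IsStrongDeformation.joinedIn {V K : Set X} {G : X × unitInterval → X}
    (hG : IsStrongDeformation V K G) {v : X} (hv : v ∈ V) : JoinedIn V v (G (v, 1)) := by
  refine ⟨⟨⟨fun t => G (v, t), ?_⟩, hG.apply_zero v hv, rfl⟩, hG.mem v hv⟩
  exact hG.continuousOn.comp_continuous (by fun_prop) fun t => ⟨hv, mem_univ t⟩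

variable [T1Space X] {I : Set (Set X)} {W : Set X → Set X}

lemma continuousOn_prod_of_inter_subset_singleton {Y Z : Type*} [TopologicalSpace Y]
    [TopologicalSpace Z] {f : X × Y → Z} (hI : I.Finite) (hcl : ∀ T ∈ I, IsClosed T)
    (hinter : ∀ T ∈ I, ∀ S ∈ I, T ≠ S → T ∩ S ⊆ {x}) (hW : ∀ T ∈ I, W T ⊆ T)
    (hx : ∀ T ∈ I, x ∈ W T) (hfx : ContinuousOn f ({x} ×ˢ univ))
    (hf : ∀ T ∈ I, ContinuousOn f (W T ×ˢ univ)) :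
    ContinuousOn f (({x} ∪ ⋃ T ∈ I, W T) ×ˢ univ) := by
  refine continuousOn_of_finite_isClosed_cover (F := fun T => T ×ˢ univ) (hI.insert {x})
    (forall_mem_insert.2 ⟨isClosed_singleton.prod isClosed_univ,
      fun T hT => (hcl T hT).prod isClosed_univ⟩) ?_
    (forall_mem_insert.2 ⟨hfx.mono inter_subset_right, fun T hT => (hf T hT).mono ?_⟩)
  · rintro ⟨w, y⟩ ⟨hw, hy⟩
    rw [biUnion_insert]
    refine hw.imp (fun hwx => ⟨hwx, hy⟩) fun hw => ?_
    obtain ⟨T, hT, hwT⟩ := mem_iUnion₂.1 hw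
    exact mem_iUnion₂.2 ⟨T, hT, hW T hT hwT, hy⟩
  · rintro ⟨w, y⟩ ⟨⟨rfl | hw, hy⟩, hwT, -⟩
    · exact ⟨hx T hT, hy⟩
    obtain ⟨S, hS, hwS⟩ := mem_iUnion₂.1 hw
    by_cases hTS : T = S
    · exact ⟨hTS ▸ hwS, hy⟩
    · exact ⟨hinter T hT S hS hTS ⟨hwT, hW S hS hwS⟩ ▸ hx T hT, hy⟩

lemma exists_isStrongDeformation_iUnion (hI : I.Finite) (hcl : ∀ T ∈ I, IsClosed T)
    (hinter : ∀ T ∈ I, ∀ S ∈ I, T ≠ S → T ∩ S ⊆ {x}) (hW : ∀ T ∈ I, W T ⊆ T)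
    (hx : ∀ T ∈ I, x ∈ W T) {c : Set X → X × unitInterval → X}
    (hc : ∀ T ∈ I, IsStrongDeformation (W T) {x} (c T)) :
    ∃ C, IsStrongDeformation ({x} ∪ ⋃ T ∈ I, W T) {x} C := by
  obtain ⟨C, hCx, hCT⟩ := exists_eq_of_inter_subset_singleton hW hinter fun T hT t =>
    (hc T hT).apply_eq x ⟨hx T hT, rfl⟩ t
  have hcases {w : X} (hw : w ∈ {x} ∪ ⋃ T ∈ I, W T) : w = x ∨ ∃ T ∈ I, w ∈ W T := by
    simpa only [singleton_union, mem_insert_iff, mem_iUnion, exists_prop] using hw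
  have hcont := continuousOn_prod_of_inter_subset_singleton hI hcl hinter hW hx
    ((continuousOn_const (c := x)).congr (by rintro ⟨_, t⟩ ⟨rfl, -⟩; exact hCx t))
    fun T hT => (hc T hT).continuousOn.congr fun q hq => hCT T hT q.1 hq.1 q.2
  refine ⟨C, hcont, fun w hw t => ?_, fun w hw => ?_, fun w hw => ?_, ?_⟩
  · rcases hcases hw with rfl | ⟨T, hT, hwT⟩
    · exact (hCx t).symm ▸ Or.inl rfl
    · exact hCT T hT w hwT t ▸ Or.inr (mem_iUnion₂.2 ⟨T, hT, (hc T hT).mem w hwT t⟩)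
  · rcases hcases hw with rfl | ⟨T, hT, hwT⟩
    exacts [hCx 0, (hCT T hT w hwT 0).trans ((hc T hT).apply_zero w hwT)]
  · rcases hcases hw with rfl | ⟨T, hT, hwT⟩
    exacts [hCx 1, hCT T hT w hwT 1 ▸ (hc T hT).apply_one_mem w hwT]
  · rintro _ ⟨-, rfl⟩
    exact hCx

end Gluing

lemma LocallyStronglyContractible.exists_isStrongDeformation {X : Type} [TopologicalSpace X]
    {T N : Set X} {x : X} (hT : LocallyStronglyContractible T) (hx : x ∈ T) (hN : N ∈ 𝓝 x) :
    ∃ O c, IsOpen O ∧ x ∈ O ∧ T ∩ O ⊆ N ∧ IsStrongDeformation (T ∩ O) {x} c := by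
  obtain ⟨V, hV, hVN, hxV, H, h0, h1, hfix⟩ := hT ⟨x, hx⟩ (Subtype.val ⁻¹' N)
    (continuous_subtype_val.continuousAt.preimage_mem_nhds hN)
  obtain ⟨O, hO, rfl⟩ := isOpen_induced_iff.1 hV
  classical
  let c (q : X × unitInterval) : X :=
    if h : q.1 ∈ T ∩ O then ((H (⟨⟨q.1, h.1⟩, h.2⟩, q.2) : T) : X) else x
  have hc (w : X) (hw : w ∈ T ∩ O) (t : unitInterval) :
      c (w, t) = (H (⟨⟨w, hw.1⟩, hw.2⟩, t) : T) := dif_pos hw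
  refine ⟨O, c, hO, hxV, fun z hz => @hVN ⟨z, hz.1⟩ hz.2, ?_, fun w hw t => ?_, fun w hw => ?_,
    fun w hw => ?_, ?_⟩
  · rw [continuousOn_iff_continuous_domRestrict]
    have hcont : Continuous fun q : ((T ∩ O) ×ˢ univ : Set (X × unitInterval)) =>
        ((H (⟨⟨q.1.1, q.2.1.1⟩, q.2.1.2⟩, q.1.2) : T) : X) := by fun_prop
    exact hcont.congr fun q => (hc q.1.1 q.2.1 q.1.2).symm
  · rw [hc w hw]
    exact ⟨Subtype.coe_prop _, (H _).2⟩
  · rw [hc w hw, h0]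
  · rw [hc w hw, h1]
    rfl
  · rintro w ⟨hw, rfl⟩ t
    rw [hc w hw, hfix]

lemma IsStrongDeformation.exists_contraction {X : Type*} [TopologicalSpace X] {K V : Set X} {x : X}
    {G C : X × unitInterval → X} (hG : IsStrongDeformation V K G)
    (hC : IsStrongDeformation (V ∩ K) {x} C) (hxV : x ∈ V) (hxK : x ∈ K) :
    ∃ H : C(↥V × unitInterval, ↥V), (∀ v, H (v, 0) = v) ∧ (∀ v, H (v, 1) = ⟨x, hxV⟩) ∧
      ∀ t, H (⟨x, hxV⟩, t) = ⟨x, hxV⟩ := by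
  have hGcont : Continuous fun q : unitInterval × V => G (q.2, q.1) :=
    hG.continuousOn.comp_continuous (by fun_prop) fun q => ⟨q.2.2, mem_univ _⟩
  have hmem (v : V) : G (v, 1) ∈ V ∩ K := ⟨hG.mem v v.2 1, hG.apply_one_mem v v.2⟩
  have hretract : Continuous fun v : V => G (v, 1) :=
    hG.continuousOn.comp_continuous (by fun_prop) fun v => ⟨v.2, mem_univ _⟩
  have hCcont : Continuous fun q : unitInterval × V => C (G (q.2, 1), q.1) :=
    hC.continuousOn.comp_continuous ((hretract.comp continuous_snd).prodMk continuous_fst)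
      fun q => ⟨hmem q.2, mem_univ _⟩
  have hGx (t : unitInterval) : G (x, t) = x := hG.apply_eq x ⟨hxV, hxK⟩ t
  let ρ : C(V, V) := ⟨fun v => ⟨G (v, 1), (hmem v).1⟩, hretract.subtype_mk _⟩
  let F₁ : (ContinuousMap.id V).HomotopyRel ρ {⟨x, hxV⟩} :=
    { toFun := fun q => ⟨G (q.2, q.1), hG.mem q.2 q.2.2 q.1⟩
      continuous_toFun := hGcont.subtype_mk _
      map_zero_left := fun v => Subtype.ext (hG.apply_zero v v.2)
      map_one_left := fun v => rfl
      prop' := by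
        rintro t _ rfl
        exact Subtype.ext (hGx t) }
  let F₂ : ρ.HomotopyRel (ContinuousMap.const V ⟨x, hxV⟩) {⟨x, hxV⟩} :=
    { toFun := fun q => ⟨C (G (q.2, 1), q.1), (hC.mem _ (hmem q.2) q.1).1⟩
      continuous_toFun := hCcont.subtype_mk _
      map_zero_left := fun v => Subtype.ext (hC.apply_zero _ (hmem v))
      map_one_left := fun v => Subtype.ext (hC.apply_one_mem _ (hmem v))
      prop' := by
        rintro t _ rfl
        exact Subtype.ext (hC.apply_eq _ ⟨hmem ⟨x, hxV⟩, hGx 1⟩ t) }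
  let F := F₁.trans F₂
  exact ⟨⟨fun q => F (q.2, q.1), F.continuous.comp continuous_swap⟩, F.apply_zero, F.apply_one,
    fun t => F.eq_fst t rfl⟩

end Contraction

section CyclicStar

variable {X : Type} [MetricSpace X] {A P : Set X} {a b x : X}

/-- The union of all maximal cyclic subsets through `x`, with `x` itself added in case there are
none. -/
def cyclicStar {X : Type} [TopologicalSpace X] (x : X) : Set X :=
  {x} ∪ ⋃₀ {T | MaximalCyclic T ∧ x ∈ T}

lemma arc_subset_cyclicStar (hcl : IsClosed (cyclicStar x)) (hA : IsArc A a b)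
    (ha : a ∈ cyclicStar x) (hb : b ∈ cyclicStar x) : A ⊆ cyclicStar x := by
  intro c hc
  by_contra hcK
  obtain ⟨G, -, d, hd, e, he, hG, hcG, hGi⟩ := hA.exists_gap hcl ha hb hc hcK
  have hnot {T : Set X} (hT : MaximalCyclic T) (hxT : x ∈ T) (hdT : d ∈ T) : e ∉ T := fun heT =>
    hcK (Or.inr ⟨T, ⟨hT, hxT⟩, hT.arc_subset hG hdT heT hcG⟩)
  rcases hd with rfl | ⟨T, ⟨hT, hxT⟩, hdT⟩ <;> rcases he with rfl | ⟨S, ⟨hS, hxS⟩, heS⟩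
  · exact hG.ne rfl
  · exact hnot hS hxS hxS heS
  · exact hnot hT hxT hdT hxT
  have hex : e ≠ x := fun hex => hnot hT hxT hdT (hex ▸ hxT)
  obtain ⟨B, hBS, hB⟩ := hS.2.1.exists_arc heS hxS hex
  have hGB : IsArc (G ∪ B) d x := hG.join hB fun z hz =>
    (hGi ⟨hz.1, Or.inr ⟨S, ⟨hS, hxS⟩, hBS hz.2⟩⟩).resolve_left fun hzd =>
      hnot hS hxS (hzd ▸ hBS hz.2) heS
  exact hnot hT hxT hdT (hT.arc_subset hGB hdT hxT (Or.inl hG.right_mem))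

lemma jordanCurve_subset_cyclicStar {J : Set X} (hJ : IsJordanCurve J)
    (hx : ∀ T, MaximalCyclic T → (T ∩ J).Nonempty → x ∈ T) : J ⊆ cyclicStar x := by
  have ⟨e⟩ := hJ
  obtain ⟨T, hJT, hT⟩ := hJ.cyclicallyConnected.exists_maximalCyclic ⟨e 0, (e 0).2⟩
  exact fun z hz => Or.inr ⟨T, ⟨hT, hx T hT ⟨e 0, hJT (e 0).2, (e 0).2⟩⟩, hJT hz⟩

lemma armSetting_cyclicStar [LocallyPathConnectedSpace X] (hcl : IsClosed (cyclicStar x))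
    (hP : IsOpen P) (hxP : x ∈ P) (hmiss : ∀ T, MaximalCyclic T → (T ∩ P).Nonempty → x ∈ T) :
    ArmSetting (cyclicStar x) (pathComponentIn P x) where
  isClosed := hcl
  isOpen := hP.pathComponentIn x
  isPathConnected := isPathConnected_pathComponentIn hxP
  inter_nonempty := ⟨x, mem_pathComponentIn_self hxP, Or.inl rfl⟩
  arc_subset := arc_subset_cyclicStar hcl
  jordanCurve_subset hJ hJP := jordanCurve_subset_cyclicStar hJ fun T hT hTJ =>
    hmiss T hT (hTJ.mono (inter_subset_inter_right T (hJP.trans pathComponentIn_subset)))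

lemma inter_eq_inter_biInter_compl_diff {α : Type*} {𝒯 : Set (Set α)} {O : Set α → Set α}
    {T M : Set α} {x : α} (hT : T ∈ 𝒯) (hinter : ∀ S ∈ 𝒯, T ≠ S → T ∩ S ⊆ {x})
    (hx : ∀ S ∈ 𝒯, x ∉ S \ O S) (hM : T ∩ O T ⊆ M) :
    T ∩ O T = T ∩ (M ∩ ⋂ S ∈ 𝒯, (S \ O S)ᶜ) := by
  refine Subset.antisymm (fun z hz => ⟨hz.1, hM hz, mem_iInter₂.2 fun S hS hzS => ?_⟩)
    fun z hz => ⟨hz.1, by_contra fun hzO => mem_iInter₂.1 hz.2.2 T hT ⟨hz.1, hzO⟩⟩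
  by_cases hTS : T = S
  · exact hzS.2 (hTS ▸ hz.2)
  · exact hx S hS (hinter S hS hTS ⟨hz.1, hzS.1⟩ ▸ hzS)

lemma pathComponentIn_inter_cyclicStar {W : Set X → Set X} (hxP : x ∈ P)
    (hWP : ∀ T, MaximalCyclic T → x ∈ T → W T = T ∩ P)
    (hWj : ∀ T, MaximalCyclic T → x ∈ T → ∀ w ∈ W T, JoinedIn (W T) w x) :
    pathComponentIn P x ∩ cyclicStar x =
      {x} ∪ ⋃ T ∈ {T : Set X | MaximalCyclic T ∧ x ∈ T}, W T := by
  refine Subset.antisymm ?_ (union_subset ?_ (iUnion₂_subset fun T hT w hw => ?_))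
  · rintro z ⟨hz, hzx | ⟨T, hT, hzT⟩⟩
    · exact Or.inl hzx
    · exact Or.inr (mem_iUnion₂.2 ⟨T, hT, hWP T hT.1 hT.2 ▸ ⟨hzT, pathComponentIn_subset hz⟩⟩)
  · exact singleton_subset_iff.2 ⟨mem_pathComponentIn_self hxP, Or.inl rfl⟩
  · have hW := hWP T hT.1 hT.2
    exact ⟨((hWj T hT.1 hT.2 w hw).mono (hW.trans_subset inter_subset_right)).symm,
      Or.inr ⟨T, hT, (hW.subset hw).1⟩⟩

variable [ProperSpace X] [LocallyPathConnectedSpace X]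

lemma isClosed_cyclicStar (hfin : {T : Set X | MaximalCyclic T ∧ x ∈ T}.Finite) :
    IsClosed (cyclicStar x) := by
  rw [cyclicStar, sUnion_eq_biUnion]
  exact isClosed_singleton.union (hfin.isClosed_biUnion fun T hT => hT.1.isClosed)

lemma exists_isStrongDeformation_cyclicStar
    (hfin : {T : Set X | MaximalCyclic T ∧ x ∈ T}.Finite)
    (h : ∀ T : Set X, MaximalCyclic T → x ∈ T → LocallyStronglyContractible T) {N : Set X}
    (hN : N ∈ 𝓝 x) : ∃ P ⊆ N, IsOpen P ∧ x ∈ P ∧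
      ∃ C, IsStrongDeformation (pathComponentIn P x ∩ cyclicStar x) {x} C := by
  have hexists (T : Set X) : ∃ O c, MaximalCyclic T → x ∈ T →
      IsOpen O ∧ x ∈ O ∧ T ∩ O ⊆ interior N ∧ IsStrongDeformation (T ∩ O) {x} c := by
    by_cases hT : MaximalCyclic T ∧ x ∈ T
    · obtain ⟨O, c, hO⟩ := (h T hT.1 hT.2).exists_isStrongDeformation hT.2 (interior_mem_nhds.2 hN)
      exact ⟨O, c, fun _ _ => hO⟩
    · exact ⟨∅, fun q => q.1, fun hmax hx => absurd ⟨hmax, hx⟩ hT⟩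
  choose O c hOc using hexists
  have hinter : ∀ T ∈ {T : Set X | MaximalCyclic T ∧ x ∈ T},
      ∀ S ∈ {T : Set X | MaximalCyclic T ∧ x ∈ T}, T ≠ S → T ∩ S ⊆ {x} :=
    fun T hT S hS hne z hz => by_contra fun hzx =>
      hne (hT.1.eq_of_mem hS.1 hz.1 hT.2 hz.2 hS.2 hzx)
  obtain ⟨C, hC⟩ := exists_isStrongDeformation_iUnion hfin (fun T hT => hT.1.isClosed) hinter
    (fun T _ => inter_subset_left) (fun T hT => ⟨hT.2, (hOc T hT.1 hT.2).2.1⟩)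
    fun T hT => (hOc T hT.1 hT.2).2.2.2
  have hxS (S : Set X) (hS : MaximalCyclic S ∧ x ∈ S) : x ∉ S \ O S :=
    fun hx => hx.2 (hOc S hS.1 hS.2).2.1
  set P : Set X := interior N ∩ ⋂ T ∈ {T : Set X | MaximalCyclic T ∧ x ∈ T}, (T \ O T)ᶜ
  have hxP : x ∈ P := ⟨mem_interior_iff_mem_nhds.2 hN, mem_iInter₂.2 hxS⟩
  have hWP (T : Set X) (hT : MaximalCyclic T) (hxT : x ∈ T) : T ∩ O T = T ∩ P :=
    inter_eq_inter_biInter_compl_diff ⟨hT, hxT⟩ (hinter T ⟨hT, hxT⟩) hxS (hOc T hT hxT).2.2.1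
  refine ⟨P, inter_subset_left.trans interior_subset, isOpen_interior.inter
    (hfin.isOpen_biInter fun T hT => (hT.1.isClosed.sdiff (hOc T hT.1 hT.2).1).isOpen_compl), hxP,
    C, ?_⟩
  rw [pathComponentIn_inter_cyclicStar hxP hWP fun T hT hxT w hw => ?_]
  · exact hC
  · have hdef := (hOc T hT hxT).2.2.2
    exact hdef.apply_one_mem w hw ▸ hdef.joinedIn hw

lemma eventually_mem_of_maximalCyclic (hfin : {T : Set X | MaximalCyclic T}.Finite) (x : X) :
    ∀ᶠ z in 𝓝 x, ∀ T, MaximalCyclic T → z ∈ T → x ∈ T := by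
  refine (Filter.eventually_all_finite hfin).2 fun T hT => ?_
  by_cases hxT : x ∈ T
  · exact .of_forall fun _ _ => hxT
  · filter_upwards [hT.isClosed.isOpen_compl.mem_nhds hxT] with z hzT hz
    exact absurd hz hzT

end CyclicStar

theorem locallyStronglyContractible_of_maximalCyclic_general
    (X : Type) [MetricSpace X] [ProperSpace X] [LocallyConnectedSpace X]
    (hfin : {T : Set X | MaximalCyclic T}.Finite)
    (h : ∀ T : Set X, MaximalCyclic T → LocallyStronglyContractible ↥T) :
    LocallyStronglyContractible X := by
  intro x U hU
  have : LocallyPathConnectedSpace X := locallyPathConnectedSpace_of_complete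
  have hfin' := hfin.subset (sep_subset {T : Set X | MaximalCyclic T} fun T => x ∈ T)
  obtain ⟨P, hPN, hP, hxP, C, hC⟩ := exists_isStrongDeformation_cyclicStar hfin'
    (fun T hT _ => h T hT) (inter_mem hU (eventually_mem_of_maximalCyclic hfin x))
  have hS : ArmSetting (cyclicStar x) (pathComponentIn P x) :=
    armSetting_cyclicStar (isClosed_cyclicStar hfin') hP hxP fun T hT ⟨z, hzT, hzP⟩ =>
      (hPN hzP).2 T hT hzT
  obtain ⟨G, hG⟩ := hS.exists_isStrongDeformation
  exact ⟨pathComponentIn P x, hS.isOpen, fun z hz => (hPN (pathComponentIn_subset hz)).1,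
    mem_pathComponentIn_self hxP, hG.exists_contraction hC (mem_pathComponentIn_self hxP)
      (Or.inl rfl)⟩

/-- A Peano space with only finitely many maximal cyclic subsets, all of which are
locally strongly contractible, is locally strongly contractible. -/
theorem locallyStronglyContractible_of_maximalCyclic
    (X : Type) [MetricSpace X] [CompactSpace X] [ConnectedSpace X] [LocallyConnectedSpace X]
    (hfin : {T : Set X | MaximalCyclic T}.Finite)
    (h : ∀ T : Set X, MaximalCyclic T → LocallyStronglyContractible ↥T) :
    LocallyStronglyContractible X :=
  locallyStronglyContractible_of_maximalCyclic_general X hfin h
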